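/- arXiv:2105.00541 — 2 statements merged into one kernel-verified Lean document; each statement's English description precedes it below -/
import Mathlib

section
/- Let W = (𝒫,[n]) be an admissible Wilson loop diagram with k propagators. Then each Grassmann necklace minor Δ_{I_a}(x) ∈ ℝ[x] of M_{V(𝒫)} is, up to sign, a product of polynomials each of which is either a single variable x_{p,v} or a 2×2 determinant x_{p,e}x_{q,e+1} − x_{p,e+1}x_{q,e}, where p and q are distinct propagators of 𝒫 both incident to the edge e; in particular every irreducible factor of Δ_{I_a}(x) is linear (a single variable) or quadratic (such a 2×2 determinant), and Δ_{I_a}(x) has an irreducible quadratic factor only if two propagators of 𝒫 are incident to a common edge. -/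
/-- `b` lies strictly inside the cyclic interval going (in the increasing cyclic direction)
from `a` to `c` in `ZMod n`. -/
def Inside {n : ℕ} (a b c : ZMod n) : Prop :=
  0 < (b - a).val ∧ (b - a).val < (c - a).val

/-- Two propagators (given as ordered pairs representing unordered pairs) cross:
exactly one endpoint of `q` lies strictly inside each of the two cyclic intervals into
which the endpoints of `p` divide `ZMod n`. -/
def Cross {n : ℕ} (p q : ZMod n × ZMod n) : Prop :=
  (Inside p.1 q.1 p.2 ∧ Inside p.2 q.2 p.1) ∨
    (Inside p.1 q.2 p.2 ∧ Inside p.2 q.1 p.1)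

/-- The support `V_p = {i, i+1, j, j+1}` of a propagator `p = (i,j)`. -/
def propSupp {n : ℕ} (p : ZMod n × ZMod n) : Finset (ZMod n) :=
  {p.1, p.1 + 1, p.2, p.2 + 1}

/-- The support `V_P` of a multiset of propagators. -/
def multiSupp {n : ℕ} (P : Multiset (ZMod n × ZMod n)) : Finset (ZMod n) :=
  (P.map propSupp).sup

/-- A Wilson loop diagram `(Ps, [n])` is admissible: no two propagators cross,
every nonempty subset `P` of the propagators satisfies `|V_P| ≥ |P| + 3`
(local density), and `n ≥ |Ps| + 4` (global density). -/
def Admissible (n : ℕ) (Ps : Multiset (ZMod n × ZMod n)) : Prop :=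
  (∀ p ∈ Ps, ∀ q ∈ Ps, ¬ Cross p q) ∧
  (∀ P : Multiset (ZMod n × ZMod n), P ≤ Ps → P ≠ 0 →
    Multiset.card P + 3 ≤ (multiSupp P).card) ∧
  Multiset.card Ps + 4 ≤ n


open MvPolynomial

/-- The polynomial ring `ℝ[x_{p,v}]` with variables indexed by propagator rows and
vertices of the diagram. -/
abbrev WR (k n : ℕ) : Type := MvPolynomial (Fin k × ZMod n) ℝ

/-- Its field of fractions `K`. -/
abbrev WF (k n : ℕ) : Type := FractionRing (WR k n)

/-- The matrix `M_{V(𝒫)}` of a Wilson loop diagram, with entries in `ℝ[x]`: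
the `(p,v)` entry is `x_{p,v}` if `v ∈ V_p` and `0` otherwise. -/
noncomputable def MWpoly (k n : ℕ) (P : Fin k → ZMod n × ZMod n) :
    Matrix (Fin k) (ZMod n) (WR k n) :=
  Matrix.of fun i v => if v ∈ propSupp (P i) then X (i, v) else 0

/-- The matrix `M_{V(𝒫)}` of a Wilson loop diagram, over the field `K`. -/
noncomputable def MW (k n : ℕ) (P : Fin k → ZMod n × ZMod n) :
    Matrix (Fin k) (ZMod n) (WF k n) :=
  Matrix.of fun i v => algebraMap (WR k n) (WF k n) (MWpoly k n P i v)

/-- The minor `Δ_S(x) ∈ ℝ[x]` of `M_{V(𝒫)}` on a `k`-element set `S` of columns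
(and `0` if `S` does not have `k` elements).  It is well defined up to the sign
coming from the chosen enumeration of `S`. -/
noncomputable def minorW (k n : ℕ) (P : Fin k → ZMod n × ZMod n)
    (S : Finset (ZMod n)) : WR k n :=
  if h : S.card = k then
    ((MWpoly k n P).submatrix id
      (fun i : Fin k => ((S.equivFin.symm (Fin.cast h.symm i)) : ZMod n))).det
  else 0

/-- The position of `x` in the cyclic order `<ₐ` starting at `a`. -/
def keyW {n : ℕ} (a x : ZMod n) : ℕ := (x - a).val

/-- The Gale order `≤ₐ` associated to the cyclic shift `<ₐ`:  `S ≤ₐ T` iff the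
sorted lists of positions agree in length and are pointwise `≤`. -/
def GaleLEat {n : ℕ} (a : ZMod n) (S T : Finset (ZMod n)) : Prop :=
  List.Forall₂ (· ≤ ·)
    ((S.image (keyW a)).sort (· ≤ ·)) ((T.image (keyW a)).sort (· ≤ ·))

/-- `S` is a basis of columns of `M_{V(𝒫)}`: it has `k` elements and its maximal
minor is nonzero. -/
def IsBasisW (k n : ℕ) (P : Fin k → ZMod n × ZMod n) (S : Finset (ZMod n)) : Prop :=
  S.card = k ∧ minorW k n P S ≠ 0

/-- `S` is the Grassmann necklace element `I_a`: the `≤ₐ`-least basis. -/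
def NecklaceAt (k n : ℕ) (P : Fin k → ZMod n × ZMod n) (a : ZMod n)
    (S : Finset (ZMod n)) : Prop :=
  IsBasisW k n P S ∧ ∀ T : Finset (ZMod n), IsBasisW k n P T → GaleLEat a S T


section Core
variable {ι : Type} [DecidableEq ι]

theorem wl_hall (A : Finset ι) (V : ι → Finset ℕ) (T : Finset ℕ)
    (h : ∀ B ⊆ A, B.card ≤ (B.biUnion V ∩ T).card) :
    ∃ g : ι → ℕ, Set.InjOn g A ∧ ∀ i ∈ A, g i ∈ V i ∧ g i ∈ T := by
  have := (Finset.all_card_le_biUnion_card_iff_exists_injective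
    (fun i : A => V i ∩ T)).1 (by
      intro s
      have h1 := h (s.map (Function.Embedding.subtype _)) (by
        intro x hx
        simp only [Finset.mem_map, Function.Embedding.subtype_apply] at hx
        obtain ⟨y, _, rfl⟩ := hx
        exact y.2)
      rw [Finset.card_map] at h1
      refine h1.trans (Finset.card_le_card ?_)
      intro x hx
      simp only [Finset.mem_inter, Finset.mem_biUnion, Finset.mem_map,
        Function.Embedding.subtype_apply] at hx ⊢
      obtain ⟨⟨_, ⟨y, hy, rfl⟩, hx⟩, hT⟩ := hx
      exact ⟨y, hy, hx, hT⟩)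
  obtain ⟨g, hg, hg2⟩ := this
  refine ⟨fun i => if h : i ∈ A then g ⟨i, h⟩ else 0, ?_, ?_⟩
  · intro i hi j hj hij
    simp only [Finset.mem_coe] at hi hj
    simp only [hi, hj, dif_pos] at hij
    have := hg hij
    simpa using this
  · intro i hi
    have := hg2 ⟨i, hi⟩
    simp only [hi, dif_pos]
    simpa using this

/-- minimal closed set facts -/
theorem wl_HI (A R : Finset ι) (V : ι → Finset ℕ) (f : ι → ℕ)
    (hinj : Set.InjOn f A) (hV : ∀ i ∈ A, f i ∈ V i) (hRA : R ⊆ A)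
    (hcl : ∀ i ∈ A, ∀ u ∈ V i, u ∈ R.image f → i ∈ R)
    (hmin : ∀ R' ⊆ R, R'.Nonempty → (∀ i ∈ A, ∀ u ∈ V i, u ∈ R'.image f → i ∈ R') → R' = R) :
    ∀ B ⊆ R, B.Nonempty → B ≠ R → B.card + 1 ≤ (B.biUnion V ∩ R.image f).card := by
  intro B hB hBn hBR
  by_contra hlt
  have hinjR : Set.InjOn f R := hinj.mono (by exact_mod_cast hRA)
  have hsub : B.image f ⊆ B.biUnion V ∩ R.image f := by
    intro u hu
    simp only [Finset.mem_image, Finset.mem_inter, Finset.mem_biUnion] at hu ⊢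
    obtain ⟨b, hb, rfl⟩ := hu
    exact ⟨⟨b, hb, hV b (hRA (hB hb))⟩, b, hB hb, rfl⟩
  have hc : (B.image f).card = B.card :=
    Finset.card_image_of_injOn (hinjR.mono (by exact_mod_cast hB))
  have heq : B.image f = B.biUnion V ∩ R.image f :=
    Finset.eq_of_subset_of_card_le hsub (by omega)
  have hne : (R \ B).Nonempty := by
    rw [Finset.nonempty_iff_ne_empty]
    intro h
    exact hBR (Finset.Subset.antisymm hB (Finset.sdiff_eq_empty_iff_subset.1 h))
  have := hmin (R \ B) Finset.sdiff_subset hne (by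
    intro i hi u hu hum
    obtain ⟨j, hj, rfl⟩ := Finset.mem_image.1 hum
    have hjR := (Finset.mem_sdiff.1 hj).1
    have hiR : i ∈ R := hcl i hi _ hu (Finset.mem_image_of_mem _ hjR)
    refine Finset.mem_sdiff.2 ⟨hiR, fun hiB => ?_⟩
    have : f j ∈ B.image f := by
      rw [heq]
      exact Finset.mem_inter.2 ⟨Finset.mem_biUnion.2 ⟨i, hiB, hu⟩, Finset.mem_image_of_mem _ hjR⟩
    obtain ⟨b, hb, hbj⟩ := Finset.mem_image.1 this
    have := hinjR (hB hb) hjR hbj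
    subst this
    exact (Finset.mem_sdiff.1 hj).2 hb)
  obtain ⟨b, hb⟩ := hBn
  have hb' : b ∈ R \ B := by rw [this]; exact hB hb
  exact (Finset.mem_sdiff.1 hb').2 hb

/-- Rematching -/
theorem wl_rematch (A R : Finset ι) (V : ι → Finset ℕ) (f : ι → ℕ)
    (hinj : Set.InjOn f A) (hV : ∀ i ∈ A, f i ∈ V i) (hRA : R ⊆ A)
    (hHI : ∀ B ⊆ R, B.Nonempty → B ≠ R → B.card + 1 ≤ (B.biUnion V ∩ R.image f).card)
    (p : ι) (hp : p ∈ R) (u : ℕ) (hu : u ∈ V p) (huQ : u ∈ R.image f) :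
    ∃ g : ι → ℕ, Set.InjOn g A ∧ (∀ i ∈ A, g i ∈ V i) ∧ R.image g = R.image f ∧
      A.image g = A.image f ∧ g p = u := by
  have hinjR : Set.InjOn f R := hinj.mono (by exact_mod_cast hRA)
  obtain ⟨g, hg, hg2⟩ := wl_hall (R.erase p) V ((R.image f).erase u) (by
    intro B hB
    rcases B.eq_empty_or_nonempty with rfl | hBn
    · simp
    have h1 := hHI B (hB.trans (Finset.erase_subset _ _)) hBn (by
      rintro rfl
      exact Finset.notMem_erase p B (hB hp))
    have h2 : (B.biUnion V ∩ R.image f).erase u ⊆ B.biUnion V ∩ (R.image f).erase u := by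
      intro x hx
      simp only [Finset.mem_erase, Finset.mem_inter] at hx ⊢
      tauto
    have h3 := Finset.card_le_card h2
    have h4 := Finset.pred_card_le_card_erase (s := B.biUnion V ∩ R.image f) (a := u)
    omega)
  let h : ι → ℕ := fun i => if i = p then u else if i ∈ R then g i else f i
  have hhp : h p = u := by simp [h]
  have hhR : ∀ i ∈ R, i ≠ p → h i = g i := by
    intro i hi hip; simp [h, hi, hip]
  have hhn : ∀ i, i ∉ R → h i = f i := by
    intro i hi
    have : i ≠ p := by rintro rfl; exact hi hp
    simp [h, hi, this]
  have hmR : ∀ i ∈ R, h i ∈ R.image f := by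
    intro i hi
    by_cases hip : i = p
    · subst hip; rw [hhp]; exact huQ
    · rw [hhR i hi hip]
      exact Finset.mem_of_mem_erase (hg2 i (Finset.mem_erase.2 ⟨hip, hi⟩)).2
  have hinjhR : Set.InjOn h R := by
    intro i hi j hj hij
    by_cases hip : i = p <;> by_cases hjp : j = p
    · rw [hip, hjp]
    · subst hip
      rw [hhp, hhR j hj hjp] at hij
      have := (hg2 j (Finset.mem_erase.2 ⟨hjp, hj⟩)).2
      rw [← hij] at this
      exact absurd this (Finset.notMem_erase _ _)
    · subst hjp
      rw [hhp, hhR i hi hip] at hij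
      have := (hg2 i (Finset.mem_erase.2 ⟨hip, hi⟩)).2
      rw [hij] at this
      exact absurd this (Finset.notMem_erase _ _)
    · rw [hhR i hi hip, hhR j hj hjp] at hij
      exact hg (Finset.mem_coe.2 (Finset.mem_erase.2 ⟨hip, hi⟩)) (Finset.mem_coe.2 (Finset.mem_erase.2 ⟨hjp, hj⟩)) hij
  have himR : R.image h = R.image f := by
    apply Finset.eq_of_subset_of_card_le
    · intro x hx
      obtain ⟨i, hi, rfl⟩ := Finset.mem_image.1 hx
      exact hmR i hi
    · rw [Finset.card_image_of_injOn hinjhR, Finset.card_image_of_injOn hinjR]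
  refine ⟨h, ?_, ?_, himR, ?_, hhp⟩
  · intro i hi j hj hij
    by_cases hiR : i ∈ R <;> by_cases hjR : j ∈ R
    · exact hinjhR hiR hjR hij
    · have := hmR i hiR
      rw [hij, hhn j hjR] at this
      obtain ⟨l, hl, hlj⟩ := Finset.mem_image.1 this
      have := hinj (hRA hl) hj hlj
      exact absurd (this ▸ hl) hjR
    · have := hmR j hjR
      rw [← hij, hhn i hiR] at this
      obtain ⟨l, hl, hlj⟩ := Finset.mem_image.1 this
      have := hinj (hRA hl) hi hlj
      exact absurd (this ▸ hl) hiR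
    · rw [hhn i hiR, hhn j hjR] at hij
      exact hinj hi hj hij
  · intro i hi
    by_cases hiR : i ∈ R
    · by_cases hip : i = p
      · subst hip; rw [hhp]; exact hu
      · rw [hhR i hiR hip]
        exact (hg2 i (Finset.mem_erase.2 ⟨hip, hiR⟩)).1
    · rw [hhn i hiR]; exact hV i hi
  · have e1 : A = R ∪ (A \ R) := by rw [Finset.union_sdiff_of_subset hRA]
    rw [e1, Finset.image_union, Finset.image_union, himR]
    congr 1
    apply Finset.image_congr
    intro i hi
    simp only [Finset.coe_sdiff, Set.mem_sdiff, Finset.mem_coe] at hi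
    exact hhn i hi.2

/-- Reachable set. -/
theorem wl_Z (A R : Finset ι) (V : ι → Finset ℕ) (f : ι → ℕ)
    (hinj : Set.InjOn f A) (hV : ∀ i ∈ A, f i ∈ V i) (hRA : R ⊆ A)
    (hHI : ∀ B ⊆ R, B.Nonempty → B ≠ R → B.card + 1 ≤ (B.biUnion V ∩ R.image f).card)
    (hlex : ∀ t ∈ A.image f, ∀ v ∉ A.image f, v < t →
      ¬ ∃ g : ι → ℕ, Set.InjOn g A ∧ ∀ i ∈ A, g i ∈ V i ∧ g i ∈ insert v ((A.image f).erase t))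
    (t : ℕ) (ht : t ∈ R.image f) :
    ∃ Z ⊆ A, R ⊆ Z ∧ ∀ r ∈ Z, ∀ v ∈ V r, v ≤ t → ∃ j ∈ Z, f j = v := by
  classical
  let Cl : Finset ι → Prop := fun B => R ⊆ B ∧ ∀ r ∈ B, ∀ j ∈ A, f j ∈ V r → j ∈ B
  have htS : t ∈ A.image f := Finset.image_subset_image hRA ht
  refine ⟨A.filter (fun r => ∀ B ⊆ A, Cl B → r ∈ B), Finset.filter_subset _ _, ?_, ?_⟩
  · intro r hr
    exact Finset.mem_filter.2 ⟨hRA hr, fun B _ hB => hB.1 hr⟩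
  intro r hr v hv hvt
  obtain ⟨hrA, hrB⟩ := Finset.mem_filter.1 hr
  suffices hvS : v ∈ A.image f by
    obtain ⟨j, hj, rfl⟩ := Finset.mem_image.1 hvS
    exact ⟨j, Finset.mem_filter.2 ⟨hj, fun B hBA hB => hB.2 r (hrB B hBA hB) j hj hv⟩, rfl⟩
  by_contra hvS
  have hvt' : v < t := lt_of_le_of_ne hvt (by rintro rfl; exact hvS htS)
  refine hlex t htS v hvS hvt' (wl_hall A V _ ?_)
  intro B hB
  by_contra hlt
  push Not at hlt
  have hsub : B.image f ⊆ B.biUnion V ∩ A.image f := by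
    intro u hu
    obtain ⟨b, hb, rfl⟩ := Finset.mem_image.1 hu
    exact Finset.mem_inter.2 ⟨Finset.mem_biUnion.2 ⟨b, hb, hV b (hB hb)⟩,
      Finset.mem_image_of_mem _ (hB hb)⟩
  have hc : (B.image f).card = B.card :=
    Finset.card_image_of_injOn (hinj.mono (by exact_mod_cast hB))
  have hc1 := Finset.card_le_card hsub
  have hsub2 : (B.biUnion V ∩ A.image f).erase t ⊆
      B.biUnion V ∩ insert v ((A.image f).erase t) := by
    intro x hx
    simp only [Finset.mem_erase, Finset.mem_inter, Finset.mem_insert] at hx ⊢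
    tauto
  have hc2 := Finset.card_le_card hsub2
  have hc3 := Finset.pred_card_le_card_erase (s := B.biUnion V ∩ A.image f) (a := t)
  have heq : B.image f = B.biUnion V ∩ A.image f :=
    Finset.eq_of_subset_of_card_le hsub (by omega)
  have htB : t ∈ B.image f := by
    rw [heq]
    by_contra hn
    rw [Finset.erase_eq_of_notMem hn] at hc2
    omega
  have hvB : v ∉ B.biUnion V := by
    intro hvB
    have : insert v ((B.biUnion V ∩ A.image f).erase t) ⊆
      B.biUnion V ∩ insert v ((A.image f).erase t) := by
      intro x hx
      simp only [Finset.mem_erase, Finset.mem_inter, Finset.mem_insert] at hx ⊢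
      rcases hx with rfl | hx
      · exact ⟨hvB, Or.inl rfl⟩
      · tauto
    have h1 := Finset.card_le_card this
    rw [Finset.card_insert_of_notMem (by
      intro h
      exact hvS (Finset.mem_inter.1 (Finset.mem_of_mem_erase h)).2)] at h1
    omega
  have hBcl : ∀ r ∈ B, ∀ j ∈ A, f j ∈ V r → j ∈ B := by
    intro r hr j hj hfj
    have : f j ∈ B.image f := by
      rw [heq]
      exact Finset.mem_inter.2 ⟨Finset.mem_biUnion.2 ⟨r, hr, hfj⟩, Finset.mem_image_of_mem _ hj⟩
    obtain ⟨b, hb, hbj⟩ := Finset.mem_image.1 this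
    exact hinj (hB hb) hj hbj ▸ hb
  have hRB : R ⊆ B := by
    by_contra hnot
    obtain ⟨b, hb, hbt⟩ := Finset.mem_image.1 htB
    obtain ⟨c, hc', hct⟩ := Finset.mem_image.1 ht
    have hbc : b = c := hinj (hB hb) (hRA hc') (hbt.trans hct.symm)
    subst hbc
    have h1 := hHI (R ∩ B) Finset.inter_subset_left ⟨b, Finset.mem_inter.2 ⟨hc', hb⟩⟩ (by
      intro h
      exact hnot (Finset.inter_eq_left.1 h))
    have h2 : (R ∩ B).biUnion V ∩ R.image f ⊆ (R ∩ B).image f := by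
      intro x hx
      obtain ⟨hx1, hx2⟩ := Finset.mem_inter.1 hx
      obtain ⟨y, hy, hxy⟩ := Finset.mem_biUnion.1 hx1
      obtain ⟨z, hz, rfl⟩ := Finset.mem_image.1 hx2
      exact Finset.mem_image_of_mem _ (Finset.mem_inter.2
        ⟨hz, hBcl y (Finset.mem_inter.1 hy).2 z (hRA hz) hxy⟩)
    have h3 := Finset.card_le_card h2
    have h4 := Finset.card_image_le (s := R ∩ B) (f := f)
    omega
  exact hvB (Finset.mem_biUnion.2 ⟨r, hrB B hB ⟨hRB, hBcl⟩, hv⟩)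


/-- positions of the support -/
def wlV (n x y : ℕ) : Finset ℕ := {if x = 0 then n - 1 else x - 1, x, y - 1, y}

theorem wl_mem_V {n x y v : ℕ} : v ∈ wlV n x y ↔
    ((x = 0 ∧ v = n - 1) ∨ (x ≠ 0 ∧ v = x - 1)) ∨ v = x ∨ v = y - 1 ∨ v = y := by
  unfold wlV
  simp only [Finset.mem_insert, Finset.mem_singleton]
  split_ifs with h <;> simp [h]

theorem wl_geom (n : ℕ) (A R : Finset ι) (x y : ι → ℕ) (f : ι → ℕ)
    (hxy : ∀ i ∈ A, x i + 2 ≤ y i) (hyn : ∀ i ∈ A, y i < n)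
    (hnc : ∀ i ∈ A, ∀ j ∈ A, ¬ (x i < x j ∧ x j < y i ∧ y i < y j))
    (hden : ∀ B ⊆ A, B.Nonempty → B.card + 3 ≤ (B.biUnion fun i => wlV n (x i) (y i)).card)
    (hinj : Set.InjOn f A) (hV : ∀ i ∈ A, f i ∈ wlV n (x i) (y i)) (hRA : R ⊆ A)
    (hcl : ∀ i ∈ A, ∀ u ∈ wlV n (x i) (y i), u ∈ R.image f → i ∈ R)
    (hHI : ∀ B ⊆ R, B.Nonempty → B ≠ R → B.card + 1 ≤
      (B.biUnion (fun i => wlV n (x i) (y i)) ∩ R.image f).card)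
    (hlex : ∀ t ∈ A.image f, ∀ v ∉ A.image f, v < t →
      ¬ ∃ g : ι → ℕ, Set.InjOn g A ∧
        ∀ i ∈ A, g i ∈ wlV n (x i) (y i) ∧ g i ∈ insert v ((A.image f).erase t))
    (h2 : 2 ≤ R.card) :
    ∃ p s t, p ≠ s ∧ R = {p, s} ∧ 1 ≤ t ∧ (x p = t ∨ y p = t) ∧ (x s = t ∨ y s = t) ∧
      ((f p = t - 1 ∧ f s = t) ∨ (f p = t ∧ f s = t - 1)) := by
  classical
  set V : ι → Finset ℕ := fun i => wlV n (x i) (y i) with hVdef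
  have hinjR : Set.InjOn f R := hinj.mono (by exact_mod_cast hRA)
  set Q := R.image f with hQ
  have hQc : Q.card = R.card := Finset.card_image_of_injOn hinjR
  have hQne : Q.Nonempty := Finset.card_pos.1 (by omega)
  obtain ⟨t, htQ, htmax⟩ := Q.exists_max_image id hQne
  simp only [id] at htmax
  -- density in the form used
  have hdens : ∀ (τ : ι → ℕ) (Y : Finset ι) (b c : ℕ), Y ⊆ A → Y.Nonempty →
      (∀ r ∈ Y, ∀ v ∈ V r, (∃ j ∈ Y, τ j = v) ∨ v = b ∨ v = c) → False := by
    intro τ Y b c hYA hYn h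
    have h1 := hden Y hYA hYn
    have h3 : Y.biUnion V ⊆ Y.image τ ∪ {b, c} := by
      intro v hv
      obtain ⟨r, hr, hv⟩ := Finset.mem_biUnion.1 hv
      rcases h r hr v hv with ⟨j, hj, rfl⟩ | rfl | rfl
      · exact Finset.mem_union_left _ (Finset.mem_image_of_mem _ hj)
      · simp
      · simp
    have h4 := Finset.card_le_card h3
    have h5 := Finset.card_union_le (Y.image τ) {b, c}
    have h6 := Finset.card_image_le (s := Y) (f := τ)
    have h7 := Finset.card_le_two (a := b) (b := c)
    omega
  -- rows have two columns
  have hrow : ∀ p ∈ R, ∀ u, ∃ w ∈ V p, w ∈ Q ∧ w ≠ u := by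
    intro p hp u
    have h1 := hHI {p} (by simpa using hp) (by simp) (by
      intro h; rw [← h] at h2; simp at h2)
    simp only [Finset.card_singleton, Finset.singleton_biUnion] at h1
    obtain ⟨w, hw, hwu⟩ := Finset.exists_mem_ne (s := V p ∩ Q) (by omega) u
    exact ⟨w, (Finset.mem_inter.1 hw).1, (Finset.mem_inter.1 hw).2, hwu⟩
  -- column t has two rows
  have hcol : ∀ j ∈ R, ∃ i ∈ R, i ≠ j ∧ t ∈ V i := by
    intro j hj
    by_contra hno
    push Not at hno
    have hc := Finset.card_erase_of_mem hj
    have h1 := hHI (R.erase j) (Finset.erase_subset _ _) (Finset.card_pos.1 (by omega)) (by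
      intro h; rw [h] at hc; omega)
    have h3 : (R.erase j).biUnion V ∩ Q ⊆ Q.erase t := by
      intro v hv
      obtain ⟨hv1, hv2⟩ := Finset.mem_inter.1 hv
      obtain ⟨r, hr, hv⟩ := Finset.mem_biUnion.1 hv1
      refine Finset.mem_erase.2 ⟨?_, hv2⟩
      rintro rfl
      exact hno r (Finset.mem_of_mem_erase hr) (Finset.ne_of_mem_erase hr) hv
    have h4 := Finset.card_le_card h3
    have h5 := Finset.card_erase_of_mem htQ
    omega
  -- finishing
  have hfin : ∀ p ∈ R, ∀ s ∈ R, p ≠ s → (x p = t ∨ y p = t) → (x s = t ∨ y s = t) → 1 ≤ t →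
      (∀ u ∈ V p, u ∈ Q → u = t - 1 ∨ u = t) → (∀ u ∈ V s, u ∈ Q → u = t - 1 ∨ u = t) →
      ∃ p s t, p ≠ s ∧ R = {p, s} ∧ 1 ≤ t ∧ (x p = t ∨ y p = t) ∧ (x s = t ∨ y s = t) ∧
      ((f p = t - 1 ∧ f s = t) ∨ (f p = t ∧ f s = t - 1)) := by
    intro p hp s hs hps hpt hst ht1 hup hus
    refine ⟨p, s, t, hps, ?_, ht1, hpt, hst, ?_⟩
    · by_contra hne
      have h1 := hHI {p, s} (by
        intro z hz
        simp only [Finset.mem_insert, Finset.mem_singleton] at hz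
        rcases hz with rfl | rfl <;> assumption) (by simp) (Ne.symm hne)
      rw [Finset.card_pair hps] at h1
      have h3 : Finset.biUnion {p, s} V ∩ Q ⊆ {t - 1, t} := by
        intro v hv
        obtain ⟨hv1, hv2⟩ := Finset.mem_inter.1 hv
        obtain ⟨r, hr, hv3⟩ := Finset.mem_biUnion.1 hv1
        simp only [Finset.mem_insert, Finset.mem_singleton] at hr ⊢
        rcases hr with rfl | rfl
        · exact hup v hv3 hv2
        · exact hus v hv3 hv2
      have h4 := Finset.card_le_card h3
      have h7 := Finset.card_le_two (a := t - 1) (b := t)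
      omega
    · have a1 := hup _ (hV p (hRA hp)) (Finset.mem_image_of_mem _ hp)
      have a2 := hus _ (hV s (hRA hs)) (Finset.mem_image_of_mem _ hs)
      have a3 : f p ≠ f s := fun h => hps (hinjR hp hs h)
      omega
  -- rematching packaged
  have hre : ∀ p ∈ R, ∀ u ∈ V p, u ∈ Q → ∃ (τ : ι → ℕ) (Z : Finset ι), τ p = u ∧
      Z ⊆ A ∧ R ⊆ Z ∧ (∀ i ∈ A, τ i ∈ V i) ∧ (∀ i ∈ A, τ i ∈ Q → i ∈ R) ∧
      (∀ i ∈ R, τ i ∈ Q) ∧ ∀ r ∈ Z, ∀ v ∈ V r, v ≤ t → ∃ j ∈ Z, τ j = v := by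
    intro p hp u hu huQ
    obtain ⟨τ, t1, t2, t3, t4, t5⟩ := wl_rematch A R V f hinj hV hRA hHI p hp u hu huQ
    obtain ⟨Z, z1, z2, z3⟩ := wl_Z A R V τ t1 t2 hRA (by rw [t3]; exact hHI)
      (by rw [t4]; exact hlex) t (by rw [t3]; exact htQ)
    refine ⟨τ, Z, t5, z1, z2, t2, ?_, ?_, z3⟩
    · intro i hi hiQ
      exact hcl i hi _ (t2 i hi) hiQ
    · intro i hi
      rw [hQ, ← t3]; exact Finset.mem_image_of_mem _ hi
  have hRt : ∀ i ∈ A, t ∈ V i → i ∈ R := fun i hi h => hcl i hi t h htQ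
  obtain ⟨p0, hp0, hp0t⟩ := Finset.mem_image.1 htQ
  have hp0V : t ∈ V p0 := hp0t ▸ hV p0 (hRA hp0)
  -- t < n - 1
  have htn : t < n - 1 := by
    by_contra hge
    obtain ⟨τ, Z, -, hZA, hRZ, -, -, -, hZ⟩ := hre p0 hp0 t hp0V htQ
    refine hdens τ Z 0 0 hZA ⟨p0, hRZ hp0⟩ ?_
    intro r hr v hv
    refine Or.inl (hZ r hr v hv ?_)
    have b1 := hxy r (hZA hr)
    have b2 := hyn r (hZA hr)
    rw [hVdef, wl_mem_V] at hv
    omega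
  have ht1 : 1 ≤ t := by
    by_contra hlt
    have : Q ⊆ {t} := by
      intro u hu
      have := htmax u hu
      simp; omega
    have := Finset.card_le_card this
    simp at this
    omega
  -- rows touching t
  have htype : ∀ i ∈ A, t ∈ V i → y i = t + 1 ∨ y i = t ∨ x i = t := by
    intro i hi hti
    obtain ⟨w, hw, hwQ, hwt⟩ := hrow i (hRt i hi hti) t
    have b1 := hxy i hi
    have b2 := hyn i hi
    have b3 := htmax w hwQ
    simp only [hVdef, wl_mem_V] at hti hw
    omega
  by_cases hB2 : ∃ i ∈ R, y i = t + 1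
  · exfalso
    obtain ⟨p, hpF, hpmin⟩ := (R.filter (fun i => y i = t + 1)).exists_min_image x (by
      obtain ⟨i, hi, hi2⟩ := hB2
      exact ⟨i, Finset.mem_filter.2 ⟨hi, hi2⟩⟩)
    obtain ⟨hp, hpy⟩ := Finset.mem_filter.1 hpF
    obtain ⟨u, hu, huQ, hut⟩ := hrow p hp t
    obtain ⟨τ, Z, hτp, hZA, hRZ, hτV, hτQ, hτR, hZ⟩ := hre p hp u hu huQ
    have c1 := hxy p (hRA hp)
    have c2 := hyn p (hRA hp)
    have c3 := htmax u huQ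
    have hu' : u = x p ∨ (x p ≠ 0 ∧ u = x p - 1) := by
      simp only [hVdef, wl_mem_V] at hu
      omega
    refine hdens τ (Z.filter (fun r => x p ≤ x r ∧ y r ≤ t + 1))
      (if u = x p then (if x p = 0 then n - 1 else x p - 1) else x p) (t + 1)
      ((Finset.filter_subset _ _).trans hZA)
      ⟨p, Finset.mem_filter.2 ⟨hRZ hp, le_refl _, by omega⟩⟩ ?_
    intro r hr v hv
    obtain ⟨hrZ, hr1, hr2⟩ := Finset.mem_filter.1 hr
    have d1 := hxy r (hZA hrZ)
    have d2 := hyn r (hZA hrZ)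
    have hcase : v = u ∨ (v = (if u = x p then (if x p = 0 then n - 1 else x p - 1) else x p)
        ∨ v = t + 1) ∨ (x p < v ∧ v ≤ t) := by
      simp only [hVdef, wl_mem_V] at hv
      split_ifs <;> omega
    rcases hcase with h | h | ⟨h3, h4⟩
    · exact Or.inl ⟨p, Finset.mem_filter.2 ⟨hRZ hp, le_refl _, by omega⟩, by omega⟩
    · exact Or.inr h
    · obtain ⟨j, hjZ, hjv⟩ := hZ r hrZ v hv h4
      refine Or.inl ⟨j, Finset.mem_filter.2 ⟨hjZ, ?_⟩, hjv⟩
      have e0 := hτV j (hZA hjZ)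
      rw [hjv] at e0
      have e1 := hxy j (hZA hjZ)
      have e2 := hyn j (hZA hjZ)
      have e3 := hnc p (hRA hp) j (hZA hjZ)
      have e4 := hnc j (hZA hjZ) p (hRA hp)
      by_cases hvt : v = t
      · subst hvt
        have e5 := htype j (hZA hjZ) e0
        have e6 : y j = v + 1 → x p ≤ x j := fun h =>
          hpmin j (Finset.mem_filter.2 ⟨hRt j (hZA hjZ) e0, h⟩)
        omega
      · simp only [hVdef, wl_mem_V] at e0
        omega
  · push Not at hB2
    have htype' : ∀ i ∈ A, t ∈ V i → y i = t ∨ x i = t := by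
      intro i hi h
      have := htype i hi h
      have := hB2 i (hRt i hi h)
      omega
    have hS1 : ∀ i ∈ R, x i = t → ∀ u ∈ V i, u ∈ Q → u = t - 1 ∨ u = t := by
      intro i hi hx u hu huQ
      have b1 := hxy i (hRA hi)
      have b3 := htmax u huQ
      simp only [hVdef, wl_mem_V] at hu
      omega
    by_cases hE : ∃ i ∈ R, y i = t
    · obtain ⟨p, hpF, hpmin⟩ := (R.filter (fun i => y i = t)).exists_min_image x (by
        obtain ⟨i, hi, hi2⟩ := hE
        exact ⟨i, Finset.mem_filter.2 ⟨hi, hi2⟩⟩)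
      obtain ⟨hp, hpy⟩ := Finset.mem_filter.1 hpF
      have c1 := hxy p (hRA hp)
      have c2 := hyn p (hRA hp)
      -- main claim
      have hmain : ∀ (τ : ι → ℕ) (Z : Finset ι), Z ⊆ A → R ⊆ Z → (∀ i ∈ A, τ i ∈ V i) →
          (∀ r ∈ Z, ∀ v ∈ V r, v ≤ t → ∃ j ∈ Z, τ j = v) →
          ∀ r ∈ Z.filter (fun r => x p ≤ x r ∧ y r ≤ t), ∀ v ∈ V r,
            (∃ j ∈ Z.filter (fun r => x p ≤ x r ∧ y r ≤ t), τ j = v) ∨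
            (∃ j ∈ R, x j = t ∧ τ j = v) ∨
            v = (if x p = 0 then n - 1 else x p - 1) ∨ v = x p := by
        intro τ Z hZA hRZ hτV hZ r hr v hv
        obtain ⟨hrZ, hr1, hr2⟩ := Finset.mem_filter.1 hr
        have d1 := hxy r (hZA hrZ)
        have d2 := hyn r (hZA hrZ)
        have hcase : (v = (if x p = 0 then n - 1 else x p - 1) ∨ v = x p) ∨
            (x p < v ∧ v ≤ t) := by
          simp only [hVdef, wl_mem_V] at hv
          split_ifs <;> omega
        rcases hcase with h | ⟨h3, h4⟩
        · exact Or.inr (Or.inr h)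
        obtain ⟨j, hjZ, hjv⟩ := hZ r hrZ v hv h4
        have e0 := hτV j (hZA hjZ)
        rw [hjv] at e0
        by_cases hxj : x j = t
        · refine Or.inr (Or.inl ⟨j, hRt j (hZA hjZ) ?_, hxj, hjv⟩)
          simp only [hVdef, wl_mem_V]
          omega
        refine Or.inl ⟨j, Finset.mem_filter.2 ⟨hjZ, ?_⟩, hjv⟩
        have e1 := hxy j (hZA hjZ)
        have e2 := hyn j (hZA hjZ)
        have e3 := hnc p (hRA hp) j (hZA hjZ)
        have e4 := hnc j (hZA hjZ) p (hRA hp)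
        have e6 : y j = t → x p ≤ x j := fun h =>
          hpmin j (Finset.mem_filter.2 ⟨hRt j (hZA hjZ) (by
            simp only [hVdef, wl_mem_V]; omega), h⟩)
        by_cases hvt : v = t
        · rw [hvt] at e0
          have e5 := htype' j (hZA hjZ) e0
          omega
        · simp only [hVdef, wl_mem_V] at e0
          omega
      have hYp : ∀ Z : Finset ι, R ⊆ Z → p ∈ Z.filter (fun r => x p ≤ x r ∧ y r ≤ t) :=
        fun Z hZ => Finset.mem_filter.2 ⟨hZ hp, le_refl _, hpy.le⟩
      by_cases hs : ∃ s ∈ R, x s = t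
      · obtain ⟨s, hsR, hst⟩ := hs
        by_cases hs2 : ∃ s' ∈ R, x s' = t ∧ s ≠ s'
        · obtain ⟨s', hsR', hst', hne⟩ := hs2
          exact hfin s hsR s' hsR' hne (Or.inl hst) (Or.inl hst') ht1
            (hS1 s hsR hst) (hS1 s' hsR' hst')
        push Not at hs2
        refine hfin p hp s hsR (by rintro rfl; omega) (Or.inr hpy) (Or.inl hst) ht1 ?_
          (hS1 s hsR hst)
        intro u hu huQ
        by_contra hcon
        obtain ⟨τ, Z, hτp, hZA, hRZ, hτV, hτQ, hτR, hZ⟩ := hre p hp u hu huQ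
        have c3 := htmax u huQ
        have hu' : u = x p ∨ (x p ≠ 0 ∧ u = x p - 1) := by
          simp only [hVdef, wl_mem_V] at hu
          omega
        refine hdens τ (Z.filter (fun r => x p ≤ x r ∧ y r ≤ t))
          (if u = x p then (if x p = 0 then n - 1 else x p - 1) else x p) (τ s)
          ((Finset.filter_subset _ _).trans hZA) ⟨p, hYp Z hRZ⟩ ?_
        intro r hr v hv
        rcases hmain τ Z hZA hRZ hτV hZ r hr v hv with h | ⟨j, hj, hjt, hjv⟩ | h
        · exact Or.inl h
        · rw [← hs2 j hj hjt] at hjv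
          exact Or.inr (Or.inr hjv.symm)
        · by_cases hvu : v = u
          · exact Or.inl ⟨p, hYp Z hRZ, by omega⟩
          · refine Or.inr (Or.inl ?_)
            split_ifs at h ⊢ <;> omega
      · exfalso
        obtain ⟨τ, Z, -, hZA, hRZ, hτV, -, -, hZ⟩ := hre p0 hp0 t hp0V htQ
        refine hdens τ (Z.filter (fun r => x p ≤ x r ∧ y r ≤ t))
          (if x p = 0 then n - 1 else x p - 1) (x p)
          ((Finset.filter_subset _ _).trans hZA) ⟨p, hYp Z hRZ⟩ ?_
        intro r hr v hv
        rcases hmain τ Z hZA hRZ hτV hZ r hr v hv with h | ⟨j, hj, hjt, hjv⟩ | h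
        · exact Or.inl h
        · exact absurd ⟨j, hj, hjt⟩ hs
        · exact Or.inr h
    · push Not at hE
      obtain ⟨s, hs, hne, hsV⟩ := hcol p0 hp0
      have g1 : x p0 = t := by
        have := htype' p0 (hRA hp0) hp0V
        have := hE p0 hp0
        tauto
      have g2 : x s = t := by
        have := htype' s (hRA hs) hsV
        have := hE s hs
        tauto
      exact hfin s hs p0 hp0 hne (Or.inl g2) (Or.inl g1) ht1 (hS1 s hs g2) (hS1 p0 hp0 g1)

theorem wl_step (n : ℕ) (A : Finset ι) (x y : ι → ℕ) (f : ι → ℕ) (hA : A.Nonempty)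
    (hxy : ∀ i ∈ A, x i + 2 ≤ y i) (hyn : ∀ i ∈ A, y i < n)
    (hnc : ∀ i ∈ A, ∀ j ∈ A, ¬ (x i < x j ∧ x j < y i ∧ y i < y j))
    (hden : ∀ B ⊆ A, B.Nonempty → B.card + 3 ≤ (B.biUnion fun i => wlV n (x i) (y i)).card)
    (hinj : Set.InjOn f A) (hV : ∀ i ∈ A, f i ∈ wlV n (x i) (y i))
    (hlex : ∀ t ∈ A.image f, ∀ v ∉ A.image f, v < t →
      ¬ ∃ g : ι → ℕ, Set.InjOn g A ∧
        ∀ i ∈ A, g i ∈ wlV n (x i) (y i) ∧ g i ∈ insert v ((A.image f).erase t)) :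
    ∃ R ⊆ A, R.Nonempty ∧ (∀ i ∈ A, ∀ u ∈ wlV n (x i) (y i), u ∈ R.image f → i ∈ R) ∧
      ((∃ p, R = {p}) ∨ 
    ∃ p s t, p ≠ s ∧ R = {p, s} ∧ 1 ≤ t ∧ (x p = t ∨ y p = t) ∧ (x s = t ∨ y s = t) ∧
      ((f p = t - 1 ∧ f s = t) ∨ (f p = t ∧ f s = t - 1))) := by
  classical
  obtain ⟨R, hR, hRmin⟩ := (A.powerset.filter (fun R => R.Nonempty ∧
    ∀ i ∈ A, ∀ u ∈ wlV n (x i) (y i), u ∈ R.image f → i ∈ R)).exists_min_image Finset.card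
    ⟨A, Finset.mem_filter.2 ⟨Finset.mem_powerset_self A, hA, fun i hi _ _ _ => hi⟩⟩
  obtain ⟨h1, h2, h3⟩ := Finset.mem_filter.1 hR
  have hRA := Finset.mem_powerset.1 h1
  refine ⟨R, hRA, h2, h3, ?_⟩
  have hHI := wl_HI A R (fun i => wlV n (x i) (y i)) f hinj hV hRA h3 (by
    intro R' hR' hn hc
    exact Finset.eq_of_subset_of_card_le hR' (hRmin R' (Finset.mem_filter.2
      ⟨Finset.mem_powerset.2 (hR'.trans hRA), hn, hc⟩)))
  by_cases hc : 2 ≤ R.card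
  · exact Or.inr (wl_geom n A R x y f hxy hyn hnc hden hinj hV hRA h3 hHI hlex hc)
  · left
    have := Finset.card_pos.2 h2
    exact Finset.card_eq_one.1 (by omega)

theorem wl_lex (A R : Finset ι) (V : ι → Finset ℕ) (f : ι → ℕ)
    (hinj : Set.InjOn f A) (hV : ∀ i ∈ A, f i ∈ V i) (hRA : R ⊆ A)
    (hcl : ∀ i ∈ A, ∀ u ∈ V i, u ∈ R.image f → i ∈ R)
    (hlex : ∀ t ∈ A.image f, ∀ v ∉ A.image f, v < t →
      ¬ ∃ g : ι → ℕ, Set.InjOn g A ∧ ∀ i ∈ A, g i ∈ V i ∧ g i ∈ insert v ((A.image f).erase t)) :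
    ∀ t ∈ (A \ R).image f, ∀ v ∉ (A \ R).image f, v < t →
      ¬ ∃ g : ι → ℕ, Set.InjOn g ↑(A \ R) ∧
        ∀ i ∈ A \ R, g i ∈ V i ∧ g i ∈ insert v (((A \ R).image f).erase t) := by
  rintro t ht v hv hvt ⟨g, hg, hg2⟩
  obtain ⟨j0, hj0, hj0t⟩ := Finset.mem_image.1 ht
  obtain ⟨hj0A, hj0R⟩ := Finset.mem_sdiff.1 hj0
  have hinjD : Set.InjOn f ↑(A \ R) := hinj.mono (by exact_mod_cast Finset.sdiff_subset)
  have hgQ : ∀ i ∈ A \ R, g i ∉ R.image f := fun i hi h =>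
    (Finset.mem_sdiff.1 hi).2 (hcl i (Finset.mem_sdiff.1 hi).1 _ (hg2 i hi).1 h)
  by_cases hvQ : v ∈ R.image f
  · have h1 : (A \ R).image g ⊆ ((A \ R).image f).erase t := by
      intro u hu
      obtain ⟨i, hi, rfl⟩ := Finset.mem_image.1 hu
      rcases Finset.mem_insert.1 (hg2 i hi).2 with h | h
      · exact absurd (h ▸ hvQ) (hgQ i hi)
      · exact h
    have h2 := Finset.card_le_card h1
    rw [Finset.card_image_of_injOn hg, Finset.card_erase_of_mem ht,
      Finset.card_image_of_injOn hinjD] at h2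
    have := Finset.card_pos.2 ⟨j0, hj0⟩
    omega
  · have hvA : v ∉ A.image f := by
      intro h
      obtain ⟨i, hi, rfl⟩ := Finset.mem_image.1 h
      by_cases hiR : i ∈ R
      · exact hvQ (Finset.mem_image_of_mem _ hiR)
      · exact hv (Finset.mem_image_of_mem _ (Finset.mem_sdiff.2 ⟨hi, hiR⟩))
    refine hlex t (Finset.image_subset_image Finset.sdiff_subset ht) v hvA hvt
      ⟨fun i => if i ∈ R then f i else g i, ?_, ?_⟩
    · intro i hi j hj hij
      by_cases hiR : i ∈ R <;> by_cases hjR : j ∈ R <;> simp only [hiR, hjR, if_true, if_false] at hij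
      · exact hinj hi hj hij
      · exact absurd (hij ▸ Finset.mem_image_of_mem f hiR) (hgQ j (Finset.mem_sdiff.2 ⟨hj, hjR⟩))
      · exact absurd (hij ▸ Finset.mem_image_of_mem f hjR) (hgQ i (Finset.mem_sdiff.2 ⟨hi, hiR⟩))
      · exact hg (Finset.mem_coe.2 (Finset.mem_sdiff.2 ⟨hi, hiR⟩))
          (Finset.mem_coe.2 (Finset.mem_sdiff.2 ⟨hj, hjR⟩)) hij
    · intro i hi
      by_cases hiR : i ∈ R <;> simp only [hiR, if_true, if_false]
      · refine ⟨hV i hi, Finset.mem_insert_of_mem (Finset.mem_erase.2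
          ⟨?_, Finset.mem_image_of_mem _ hi⟩)⟩
        intro h
        exact hj0R (hinj hj0A hi (hj0t.trans h.symm) ▸ hiR)
      · obtain ⟨h1, h2⟩ := hg2 i (Finset.mem_sdiff.2 ⟨hi, hiR⟩)
        refine ⟨h1, ?_⟩
        rcases Finset.mem_insert.1 h2 with h | h
        · rw [h]; exact Finset.mem_insert_self _ _
        · exact Finset.mem_insert_of_mem (Finset.mem_erase.2 ⟨Finset.ne_of_mem_erase h,
            Finset.image_subset_image Finset.sdiff_subset (Finset.mem_of_mem_erase h)⟩)

theorem wl_det_split {K : Type} [CommRing K] (A R : Finset ι) (M : ι → ℕ → K) (f : ι → ℕ)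
    (hRA : R ⊆ A) (h0 : ∀ i ∈ A, i ∉ R → ∀ j ∈ R, M i (f j) = 0) :
    (Matrix.of fun i j : A => M i (f j)).det =
      (Matrix.of fun i j : R => M i (f j)).det *
      (Matrix.of fun i j : ↥(A \ R) => M i (f j)).det := by
  rw [Matrix.twoBlockTriangular_det _ (fun i : A => (i : ι) ∈ R)]
  · congr 1
    · let e : R ≃ {a : A // (a : ι) ∈ R} :=
        ⟨fun r => ⟨⟨r, hRA r.2⟩, r.2⟩, fun a => ⟨a.1, a.2⟩, fun _ => rfl, fun _ => rfl⟩
      rw [← Matrix.det_submatrix_equiv_self e]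
      rfl
    · let e : ↥(A \ R) ≃ {a : A // ¬ (a : ι) ∈ R} :=
        ⟨fun r => ⟨⟨r, (Finset.mem_sdiff.1 r.2).1⟩, (Finset.mem_sdiff.1 r.2).2⟩,
          fun a => ⟨a.1, Finset.mem_sdiff.2 ⟨a.1.2, a.2⟩⟩, fun _ => rfl, fun _ => rfl⟩
      rw [← Matrix.det_submatrix_equiv_self e]
      rfl
  · intro i hi j hj
    exact h0 i i.2 hi j hj

theorem wl_det_one {K : Type} [CommRing K] (p : ι) (M : ι → ℕ → K) (f : ι → ℕ) :
    (Matrix.of fun i j : ↥({p} : Finset ι) => M i (f j)).det = M p (f p) := by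
  letI : Unique ↥({p} : Finset ι) := ⟨⟨⟨p, by simp⟩⟩, fun a => Subtype.ext
    (Finset.mem_singleton.1 a.2)⟩
  rw [Matrix.det_unique]
  rfl

theorem wl_det_two {K : Type} [CommRing K] (p s : ι) (hps : p ≠ s) (M : ι → ℕ → K) (f : ι → ℕ) :
    (Matrix.of fun i j : ↥({p, s} : Finset ι) => M i (f j)).det =
      M p (f p) * M s (f s) - M p (f s) * M s (f p) := by
  let g : Fin 2 → ↥({p, s} : Finset ι) := ![⟨p, by simp⟩, ⟨s, by simp⟩]
  have hg : Function.Bijective g := by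
    constructor
    · intro i j
      fin_cases i <;> fin_cases j <;> simp [g, hps, hps.symm]
    · rintro ⟨i, hi⟩
      simp only [Finset.mem_insert, Finset.mem_singleton] at hi
      rcases hi with rfl | rfl
      · exact ⟨0, rfl⟩
      · exact ⟨1, rfl⟩
  rw [← Matrix.det_submatrix_equiv_self (Equiv.ofBijective g hg), Matrix.det_fin_two]
  rfl

theorem wl_main {K : Type} [CommRing K] (n : ℕ) (x y : ι → ℕ) (f : ι → ℕ) (M : ι → ℕ → K)
    (hM : ∀ i v, v ∉ wlV n (x i) (y i) → M i v = 0) :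
    ∀ (m : ℕ) (A : Finset ι) (_ : A.card = m)
    (_ : ∀ i ∈ A, x i + 2 ≤ y i) (_ : ∀ i ∈ A, y i < n)
    (_ : ∀ i ∈ A, ∀ j ∈ A, ¬ (x i < x j ∧ x j < y i ∧ y i < y j))
    (_ : ∀ B ⊆ A, B.Nonempty → B.card + 3 ≤ (B.biUnion fun i => wlV n (x i) (y i)).card)
    (_ : Set.InjOn f A) (_ : ∀ i ∈ A, f i ∈ wlV n (x i) (y i))
    (_ : ∀ t ∈ A.image f, ∀ v ∉ A.image f, v < t →
      ¬ ∃ g : ι → ℕ, Set.InjOn g A ∧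
        ∀ i ∈ A, g i ∈ wlV n (x i) (y i) ∧ g i ∈ insert v ((A.image f).erase t)),
    ∃ (L : Multiset K), ((Matrix.of fun i j : A => M i (f j)).det = L.prod ∨
        (Matrix.of fun i j : A => M i (f j)).det = - L.prod) ∧
      ∀ F ∈ L, (∃ p, ∃ v ∈ wlV n (x p) (y p), F = M p v) ∨
        (∃ p s t, p ≠ s ∧ 1 ≤ t ∧ t < n ∧ (x p = t ∨ y p = t) ∧ (x s = t ∨ y s = t) ∧
          F = M p (t - 1) * M s t - M p t * M s (t - 1)) := by
  intro m
  induction m using Nat.strong_induction_on with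
  | _ m ih =>
  intro A hm hxy hyn hnc hden hinj hV hlex
  rcases A.eq_empty_or_nonempty with rfl | hA
  · exact ⟨0, Or.inl (by simp), by simp⟩
  obtain ⟨R, hRA, hRn, hcl, hR⟩ := wl_step n A x y f hA hxy hyn hnc hden hinj hV hlex
  have hsub : A \ R ⊆ A := Finset.sdiff_subset
  have hc : (A \ R).card < m := by
    rw [Finset.card_sdiff_of_subset hRA]
    have := Finset.card_pos.2 hRn
    have := Finset.card_le_card hRA
    omega
  obtain ⟨L, hL1, hL2⟩ := ih _ hc (A \ R) rfl (fun i hi => hxy i (hsub hi))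
    (fun i hi => hyn i (hsub hi)) (fun i hi j hj => hnc i (hsub hi) j (hsub hj))
    (fun B hB => hden B (hB.trans hsub)) (hinj.mono (by exact_mod_cast hsub))
    (fun i hi => hV i (hsub hi)) (wl_lex A R _ f hinj hV hRA hcl hlex)
  have hdet := wl_det_split A R M f hRA (by
    intro i hi hiR j hj
    apply hM
    intro h
    exact hiR (hcl i hi _ h (Finset.mem_image_of_mem _ hj)))
  rcases hR with ⟨p, rfl⟩ | ⟨p, s, t, hps, rfl, ht, hp, hs, hf⟩
  · rw [wl_det_one] at hdet
    refine ⟨M p (f p) ::ₘ L, ?_, ?_⟩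
    · rw [hdet, Multiset.prod_cons]
      rcases hL1 with h | h <;> rw [h]
      · left; rfl
      · right; ring
    · intro F hF
      rcases Multiset.mem_cons.1 hF with rfl | hF
      · exact Or.inl ⟨p, f p, hV p (hRA (by simp)), rfl⟩
      · exact hL2 F hF
  · rw [wl_det_two p s hps] at hdet
    have htn : t < n := by
      have h1 := hyn p (hRA (by simp))
      have h2 := hxy p (hRA (by simp))
      omega
    refine ⟨(M p (t - 1) * M s t - M p t * M s (t - 1)) ::ₘ L, ?_, ?_⟩
    · rw [hdet, Multiset.prod_cons]
      rcases hf with ⟨f1, f2⟩ | ⟨f1, f2⟩ <;> rw [f1, f2] <;> rcases hL1 with h | h <;> rw [h]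
      · left; rfl
      · right; ring
      · right; ring
      · left; ring
    · intro F hF
      rcases Multiset.mem_cons.1 hF with rfl | hF
      · exact Or.inr ⟨p, s, t, hps, ht, htn, hp, hs, rfl⟩
      · exact hL2 F hF

end Core

theorem wl_val_sub {n : ℕ} [NeZero n] (u w : ZMod n) :
    (u - w).val = if w.val ≤ u.val then u.val - w.val else u.val + n - w.val := by
  have h1 : u.val = ((u - w).val + w.val) % n := by
    rw [← ZMod.val_add, sub_add_cancel]
  have h2 := ZMod.val_lt (u - w)
  have h3 := ZMod.val_lt w
  have h4 := ZMod.val_lt u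
  by_cases h : (u - w).val + w.val < n
  · rw [Nat.mod_eq_of_lt h] at h1
    split_ifs <;> omega
  · rw [Nat.mod_eq_sub_mod (by omega), Nat.mod_eq_of_lt (by omega)] at h1
    split_ifs <;> omega

theorem wl_val_pred {n : ℕ} (hn : 2 ≤ n) (u : ZMod n) :
    (u - 1).val = if u.val = 0 then n - 1 else u.val - 1 := by
  haveI : NeZero n := ⟨by omega⟩
  haveI : Fact (1 < n) := ⟨by omega⟩
  rw [wl_val_sub, ZMod.val_one]
  split_ifs <;> omega

theorem wl_key_inj {n : ℕ} [NeZero n] (a : ZMod n) : Function.Injective (keyW a) := by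
  intro u v h
  have := ZMod.val_injective n h
  exact sub_left_injective this

/-- position of an edge -/
def wlE {n : ℕ} (a e : ZMod n) : ℕ := (e + 1 - a).val

theorem wl_image {n : ℕ} (hn : 2 ≤ n) (a : ZMod n) (p : ZMod n × ZMod n) :
    (propSupp p).image (keyW a) =
      wlV n (min (wlE a p.1) (wlE a p.2)) (max (wlE a p.1) (wlE a p.2)) ∪
        {if max (wlE a p.1) (wlE a p.2) = 0 then n - 1 else max (wlE a p.1) (wlE a p.2) - 1} := by
  have h1 : ∀ e : ZMod n, keyW a e = if wlE a e = 0 then n - 1 else wlE a e - 1 := by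
    intro e
    unfold wlE keyW
    rw [← wl_val_pred hn]
    congr 1
    ring
  have h2 : ∀ e : ZMod n, keyW a (e + 1) = wlE a e := fun e => rfl
  ext v
  simp only [propSupp, Finset.image_insert, Finset.image_singleton, h2, h1 p.1, h1 p.2, Finset.mem_union,
    wl_mem_V, Finset.mem_insert, Finset.mem_singleton]
  rcases le_total (wlE a p.1) (wlE a p.2) with h | h
  · rw [min_eq_left h, max_eq_right h]
    split_ifs <;> omega
  · rw [min_eq_right h, max_eq_left h]
    split_ifs <;> omega

theorem wl_cross {n : ℕ} [NeZero n] (a : ZMod n) (p q : ZMod n × ZMod n) (h : ¬ Cross p q) :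
    ¬ (min (wlE a p.1) (wlE a p.2) < min (wlE a q.1) (wlE a q.2) ∧
      min (wlE a q.1) (wlE a q.2) < max (wlE a p.1) (wlE a p.2) ∧
      max (wlE a p.1) (wlE a p.2) < max (wlE a q.1) (wlE a q.2)) := by
  intro hc
  apply h
  have hs : ∀ b c : ZMod n, (b - c).val =
      if wlE a c ≤ wlE a b then wlE a b - wlE a c else wlE a b + n - wlE a c := by
    intro b c
    unfold wlE
    rw [← wl_val_sub]
    congr 1
    ring
  have l1 : wlE a p.1 < n := ZMod.val_lt _
  have l2 : wlE a p.2 < n := ZMod.val_lt _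
  have l3 : wlE a q.1 < n := ZMod.val_lt _
  have l4 : wlE a q.2 < n := ZMod.val_lt _
  unfold Cross Inside
  simp only [hs]
  generalize wlE a p.1 = p1 at *
  generalize wlE a p.2 = p2 at *
  generalize wlE a q.1 = q1 at *
  generalize wlE a q.2 = q2 at *
  rcases le_total p1 p2 with hp | hp <;> rcases le_total q1 q2 with hq | hq <;>
    simp only [hp, hq, min_eq_left, max_eq_right, min_eq_right, max_eq_left] at hc
  · left
    split_ifs <;> omega
  · right
    split_ifs <;> omega
  · right
    split_ifs <;> omega
  · left
    split_ifs <;> omega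

theorem wl_minor_perm (k n : ℕ) (P : Fin k → ZMod n × ZMod n) (T : Finset (ZMod n))
    (G : Fin k → ZMod n) (hG : Function.Injective G) (hT : Finset.univ.image G = T) :
    ∃ ε : ℝ, (ε = 1 ∨ ε = -1) ∧
      minorW k n P T = C ε * (Matrix.of fun i j => MWpoly k n P i (G j)).det := by
  have hcard : T.card = k := by
    rw [← hT, Finset.card_image_of_injective _ hG]; simp
  let e : Fin k → ZMod n := fun i => ((T.equivFin.symm (Fin.cast hcard.symm i)) : ZMod n)
  let π : Fin k → Fin k := fun i => Fin.cast hcard (T.equivFin ⟨G i, by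
    rw [← hT]; exact Finset.mem_image_of_mem _ (Finset.mem_univ i)⟩)
  have hπ : ∀ i, e (π i) = G i := by
    intro i; simp [e, π]
  have hbij : Function.Bijective π := by
    rw [← Finite.injective_iff_bijective]
    intro i j hij
    apply hG
    rw [← hπ, ← hπ, hij]
  let σ := Equiv.ofBijective π hbij
  have hdet := Matrix.det_permute' σ ((MWpoly k n P).submatrix id e)
  have hm : minorW k n P T = ((MWpoly k n P).submatrix id e).det := by
    unfold minorW
    rw [dif_pos hcard]
  have hM : (Matrix.of fun i j => MWpoly k n P i (G j)) =
      (((MWpoly k n P).submatrix id e).submatrix id σ) := by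
    ext i j : 2
    simp only [Matrix.of_apply, Matrix.submatrix_apply, id]
    rw [show σ j = π j from rfl, hπ]
  rw [hM, hdet, hm]
  rcases Int.units_eq_one_or (Equiv.Perm.sign σ) with h | h
  · exact ⟨1, Or.inl rfl, by rw [h]; simp⟩
  · exact ⟨-1, Or.inr rfl, by rw [h]; simp⟩

theorem wl_basis (k n : ℕ) (P : Fin k → ZMod n × ZMod n)
    (G : Fin k → ZMod n) (hG : Function.Injective G) (hV : ∀ i, G i ∈ propSupp (P i)) :
    IsBasisW k n P (Finset.univ.image G) := by
  refine ⟨by rw [Finset.card_image_of_injective _ hG]; simp, ?_⟩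
  obtain ⟨ε, hε, h⟩ := wl_minor_perm k n P _ G hG rfl
  rw [h]
  have h1 : (Matrix.of fun i j => MWpoly k n P i (G j)).det ≠ 0 := by
    intro h0
    let φ : WR k n →+* ℝ := eval (fun q : Fin k × ZMod n => if q.2 = G q.1 then (1 : ℝ) else 0)
    have h2 := congrArg φ h0
    rw [RingHom.map_det, map_zero] at h2
    have h3 : φ.mapMatrix (Matrix.of fun i j => MWpoly k n P i (G j)) = 1 := by
      ext i j
      simp only [RingHom.mapMatrix_apply, Matrix.map_apply, Matrix.of_apply, MWpoly,
        Matrix.one_apply]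
      by_cases hij : i = j
      · subst hij
        simp [hV, φ]
      · have : G j ≠ G i := fun h => hij (hG h).symm
        split_ifs <;> simp [φ, this]
    rw [h3] at h2
    simp at h2
  refine mul_ne_zero ?_ h1
  rcases hε with rfl | rfl <;> simp

theorem wl_matching (k n : ℕ) (P : Fin k → ZMod n × ZMod n) (S : Finset (ZMod n))
    (h : IsBasisW k n P S) :
    ∃ G : Fin k → ZMod n, Function.Injective G ∧ (∀ i, G i ∈ propSupp (P i)) ∧
      Finset.univ.image G = S := by
  obtain ⟨hc, hm⟩ := h
  unfold minorW at hm
  rw [dif_pos hc, Matrix.det_apply] at hm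
  obtain ⟨σ, _, hσ⟩ := Finset.exists_ne_zero_of_sum_ne_zero hm
  have hp : ∏ i, ((MWpoly k n P).submatrix id
      (fun i : Fin k => ((S.equivFin.symm (Fin.cast hc.symm i)) : ZMod n))) (σ i) i ≠ 0 := by
    intro h0
    rw [h0] at hσ
    simp at hσ
  rw [Finset.prod_ne_zero_iff] at hp
  refine ⟨fun i => ((S.equivFin.symm (Fin.cast hc.symm (σ.symm i))) : ZMod n), ?_, ?_, ?_⟩
  · intro i j hij
    have := Subtype.ext hij
    simpa using this
  · intro i
    have := hp (σ.symm i) (Finset.mem_univ _)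
    simp only [Matrix.submatrix_apply, Equiv.apply_symm_apply, id, MWpoly, Matrix.of_apply] at this
    by_contra hn
    rw [if_neg hn] at this
    exact this rfl
  · ext v
    simp only [Finset.mem_image, Finset.mem_univ, true_and]
    constructor
    · rintro ⟨i, rfl⟩
      exact Subtype.property _
    · intro hv
      exact ⟨σ (Fin.cast hc (S.equivFin ⟨v, hv⟩)), by simp⟩

theorem wl_gale {n : ℕ} (a : ZMod n) (S T : Finset (ZMod n)) (h : GaleLEat a S T) :
    ∑ i ∈ S.image (keyW a), i ≤ ∑ i ∈ T.image (keyW a), i := by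
  have h1 := List.Forall₂.sum_le_sum h
  have h2 : ∀ U : Finset ℕ, (U.sort (· ≤ ·)).sum = ∑ i ∈ U, i := by
    intro U
    rw [← Multiset.sum_coe, Finset.sort_eq]
    exact (Finset.sum_val U).symm ▸ rfl
  rw [h2, h2] at h1
  exact h1

theorem wl_supp {n : ℕ} (hn : 2 ≤ n) (a : ZMod n) (p : ZMod n × ZMod n)
    (h4 : 4 ≤ (propSupp p).card) :
    min (wlE a p.1) (wlE a p.2) + 2 ≤ max (wlE a p.1) (wlE a p.2) ∧
    (propSupp p).image (keyW a) =
      wlV n (min (wlE a p.1) (wlE a p.2)) (max (wlE a p.1) (wlE a p.2)) := by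
  haveI : NeZero n := ⟨by omega⟩
  have hi := wl_image hn a p
  have hle : min (wlE a p.1) (wlE a p.2) ≤ max (wlE a p.1) (wlE a p.2) := min_le_max
  rw [← Finset.card_image_of_injective _ (wl_key_inj a), hi] at h4
  rw [hi]
  generalize min (wlE a p.1) (wlE a p.2) = x at *
  generalize max (wlE a p.1) (wlE a p.2) = y at *
  have hxy : x + 2 ≤ y := by
    by_contra hc
    have hsub : (wlV n x y ∪ {if y = 0 then n - 1 else y - 1}) ⊆
        {if x = 0 then n - 1 else x - 1, x, y} := by
      intro v
      simp only [Finset.mem_union, wl_mem_V, Finset.mem_insert, Finset.mem_singleton]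
      split_ifs <;> omega
    have h1 := Finset.card_le_card hsub
    have h2 := Finset.card_le_three (a := if x = 0 then n - 1 else x - 1) (b := x) (c := y)
    omega
  refine ⟨hxy, ?_⟩
  ext v
  simp only [Finset.mem_union, wl_mem_V, Finset.mem_singleton]
  split_ifs <;> omega

theorem wl_multiSupp {n k : ℕ} (P : Fin k → ZMod n × ZMod n) (B : Finset (Fin k)) :
    multiSupp (Multiset.map P B.val) = B.biUnion fun i => propSupp (P i) := by
  unfold multiSupp
  rw [Multiset.map_map, ← Finset.sup_def, Finset.sup_eq_biUnion]
  rfl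

theorem wl_core (k n : ℕ) (P : Fin k → ZMod n × ZMod n)
    (hW : Admissible n (Multiset.map P Finset.univ.val))
    (a : ZMod n) (S : Finset (ZMod n)) (hS : NecklaceAt k n P a S) :
    ∃ (ε : ℝ) (L : Multiset (WR k n)), (ε = 1 ∨ ε = -1) ∧
      minorW k n P S = C ε * L.prod ∧
      ∀ f ∈ L,
        (∃ (p : Fin k) (v : ZMod n), f = X (p, v)) ∨
        (∃ (p q : Fin k) (e : ZMod n), p ≠ q ∧
          ((P p).1 = e ∨ (P p).2 = e) ∧ ((P q).1 = e ∨ (P q).2 = e) ∧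
          f = X (p, e) * X (q, e + 1) - X (p, e + 1) * X (q, e)) := by
  obtain ⟨hcr, hden, hglob⟩ := hW
  have hn : 4 ≤ n := by omega
  haveI : NeZero n := ⟨by omega⟩
  obtain ⟨G, hGinj, hGV, hGS⟩ := wl_matching k n P S hS.1
  have hden' : ∀ B : Finset (Fin k), B.Nonempty →
      B.card + 3 ≤ (B.biUnion fun i => propSupp (P i)).card := by
    intro B hB
    have := hden (Multiset.map P B.val)
      (Multiset.map_le_map (Finset.val_le_iff.2 (Finset.subset_univ B)))
      (by
        intro h0
        rw [Multiset.map_eq_zero, Finset.val_eq_zero] at h0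
        exact hB.ne_empty h0)
    rwa [wl_multiSupp, Multiset.card_map] at this
  have hsupp : ∀ i, 4 ≤ (propSupp (P i)).card := by
    intro i
    have := hden' {i} (Finset.singleton_nonempty i)
    simpa using this
  obtain ⟨x, hx⟩ : ∃ x : Fin k → ℕ, x = fun i => min (wlE a (P i).1) (wlE a (P i).2) := ⟨_, rfl⟩
  obtain ⟨y, hy⟩ : ∃ y : Fin k → ℕ, y = fun i => max (wlE a (P i).1) (wlE a (P i).2) := ⟨_, rfl⟩
  have hs : ∀ i, x i + 2 ≤ y i ∧ (propSupp (P i)).image (keyW a) = wlV n (x i) (y i) := by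
    intro i
    rw [hx, hy]
    exact wl_supp (by omega) a (P i) (hsupp i)
  have hkey : ∀ v : ZMod n, a + ((keyW a v : ℕ) : ZMod n) = v := by
    intro v
    unfold keyW
    rw [ZMod.natCast_zmod_val]
    ring
  have hmem : ∀ i v, v ∈ wlV n (x i) (y i) →
      a + (v : ZMod n) ∈ propSupp (P i) ∧ keyW a (a + (v : ZMod n)) = v := by
    intro i v hv
    rw [← (hs i).2] at hv
    obtain ⟨w, hw, rfl⟩ := Finset.mem_image.1 hv
    rw [hkey]
    exact ⟨hw, rfl⟩
  let M : Fin k → ℕ → WR k n := fun i v =>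
    if v ∈ wlV n (x i) (y i) then X (i, a + (v : ZMod n)) else 0
  have hMW : ∀ i w, M i (keyW a w) = MWpoly k n P i w := by
    intro i w
    simp only [M, MWpoly, Matrix.of_apply, hkey]
    refine if_congr ?_ rfl rfl
    rw [← (hs i).2]
    constructor
    · intro h
      obtain ⟨u, hu, huw⟩ := Finset.mem_image.1 h
      rwa [← wl_key_inj a huw]
    · exact Finset.mem_image_of_mem _
  have hwE : ∀ e t, wlE a e = t → e = a + (t : ZMod n) - 1 := by
    rintro e _ rfl
    have := hkey (e + 1)
    unfold keyW at this
    unfold wlE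
    rw [this]
    ring
  have hedge : ∀ i t, (x i = t ∨ y i = t) →
      (P i).1 = a + (t : ZMod n) - 1 ∨ (P i).2 = a + (t : ZMod n) - 1 := by
    intro i t h
    have : wlE a (P i).1 = t ∨ wlE a (P i).2 = t := by
      simp only [hx, hy] at h
      omega
    exact this.imp (hwE _ _) (hwE _ _)
  obtain ⟨L, hL, hF⟩ := wl_main n x y (fun i => keyW a (G i)) M
    (fun i v hv => if_neg hv) k Finset.univ (by simp)
    (fun i _ => (hs i).1)
    (fun i _ => by
      have h1 : wlE a (P i).1 < n := ZMod.val_lt _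
      have h2 : wlE a (P i).2 < n := ZMod.val_lt _
      rw [hy]
      exact max_lt h1 h2)
    (fun i _ j _ => by
      have := wl_cross a (P i) (P j) (hcr _ (Multiset.mem_map_of_mem P (Finset.mem_univ i)) _
        (Multiset.mem_map_of_mem P (Finset.mem_univ j)))
      rw [hx, hy]
      exact this)
    (by
      intro B _ hB
      have h1 := hden' B hB
      rw [← Finset.card_image_of_injective _ (wl_key_inj a), Finset.biUnion_image] at h1
      rw [Finset.biUnion_congr rfl (fun i _ => (hs i).2)] at h1
      exact h1)
    (fun i _ j _ h => hGinj (wl_key_inj a h))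
    (fun i _ => by
      rw [← (hs i).2]
      exact Finset.mem_image_of_mem _ (hGV i))
    (by
      rintro t ht v hv hvt ⟨g, hginj, hg⟩
      have hgk : ∀ i, keyW a (a + (g i : ZMod n)) = g i := fun i =>
        (hmem i _ (hg i (Finset.mem_univ i)).1).2
      have hb := wl_basis k n P (fun i => a + (g i : ZMod n))
        (by
          intro i j hij
          apply hginj (Finset.mem_coe.2 (Finset.mem_univ i)) (Finset.mem_coe.2 (Finset.mem_univ j))
          rw [← hgk i, ← hgk j]
          exact congrArg _ hij)
        (fun i => (hmem i _ (hg i (Finset.mem_univ i)).1).1)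
      have hle := wl_gale a _ _ (hS.2 _ hb)
      rw [← hGS, Finset.image_image, Finset.image_image] at hle
      set Q := Finset.univ.image (fun i => keyW a (G i)) with hQ
      have e1 : Finset.univ.image (keyW a ∘ G) = Q := rfl
      have e2 : Finset.univ.image (keyW a ∘ fun i => a + (g i : ZMod n)) ⊆
          insert v (Q.erase t) := by
        intro w hw
        obtain ⟨i, _, rfl⟩ := Finset.mem_image.1 hw
        simp only [Function.comp, hgk]
        exact (hg i (Finset.mem_univ i)).2
      have h3 : ∑ i ∈ Finset.univ.image (keyW a ∘ fun i => a + (g i : ZMod n)), i ≤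
          ∑ i ∈ insert v (Q.erase t), i := Finset.sum_le_sum_of_subset e2
      rw [Finset.sum_insert (fun h => hv (Finset.mem_of_mem_erase h))] at h3
      have h4 := Finset.add_sum_erase Q (fun i => i) ht
      rw [e1] at hle
      omega)
  obtain ⟨ε, hε, hm⟩ := wl_minor_perm k n P S G hGinj hGS
  have hdet : (Matrix.of fun i j => MWpoly k n P i (G j)).det =
      (Matrix.of fun i j : (Finset.univ : Finset (Fin k)) => M i (keyW a (G j))).det := by
    let e : Fin k ≃ (Finset.univ : Finset (Fin k)) :=
      (Equiv.subtypeUnivEquiv (fun i => Finset.mem_univ i)).symm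
    rw [← Matrix.det_submatrix_equiv_self e
      (Matrix.of fun i j : (Finset.univ : Finset (Fin k)) => M i (keyW a (G j)))]
    congr 1
    ext i j : 2
    simp only [Matrix.of_apply, Matrix.submatrix_apply, hMW]
    rfl
  have hFF : ∀ f ∈ L,
        (∃ (p : Fin k) (v : ZMod n), f = X (p, v)) ∨
        (∃ (p q : Fin k) (e : ZMod n), p ≠ q ∧
          ((P p).1 = e ∨ (P p).2 = e) ∧ ((P q).1 = e ∨ (P q).2 = e) ∧
          f = X (p, e) * X (q, e + 1) - X (p, e + 1) * X (q, e)) := by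
    intro F hFL
    rcases hF F hFL with ⟨p, v, hv, rfl⟩ | ⟨p, s, t, hps, h1, htn, hp, hq, rfl⟩
    · exact Or.inl ⟨p, a + (v : ZMod n), if_pos hv⟩
    · refine Or.inr ⟨p, s, a + (t : ZMod n) - 1, hps, hedge p t hp, hedge s t hq, ?_⟩
      have hM1 : ∀ i, (x i = t ∨ y i = t) → M i (t - 1) = X (i, a + (t : ZMod n) - 1) ∧
          M i t = X (i, a + (t : ZMod n) - 1 + 1) := by
        intro i hi
        have hxi := (hs i).1
        have m1 : t - 1 ∈ wlV n (x i) (y i) := by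
          rw [wl_mem_V]; omega
        have m2 : t ∈ wlV n (x i) (y i) := by
          rw [wl_mem_V]; omega
        constructor
        · simp only [M]
          rw [if_pos m1, Nat.cast_sub h1, Nat.cast_one, add_sub_assoc]
        · simp only [M]
          rw [if_pos m2, sub_add_cancel]
      rw [(hM1 p hp).1, (hM1 p hp).2, (hM1 s hq).1, (hM1 s hq).2]
  rw [hdet] at hm
  rcases hL with hL | hL
  · exact ⟨ε, L, hε, by rw [hm, hL], hFF⟩
  · refine ⟨-ε, L, ?_, by rw [hm, hL]; simp, hFF⟩
    rcases hε with rfl | rfl <;> simp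

/-- for an admissible Wilson loop diagram, each Grassmann necklace
minor `Δ_{I_a}(x)` is, up to sign, a product of polynomials each of which is either
a single variable `x_{p,v}` or a `2×2` determinant
`x_{p,e} x_{q,e+1} − x_{p,e+1} x_{q,e}` with `p ≠ q` both incident to the edge `e`. -/
theorem statement6 (k n : ℕ) (P : Fin k → ZMod n × ZMod n)
    (hW : Admissible n (Multiset.map P Finset.univ.val))
    (a : ZMod n) (S : Finset (ZMod n)) (hS : NecklaceAt k n P a S) :
    ∃ (ε : ℝ) (L : Multiset (WR k n)), (ε = 1 ∨ ε = -1) ∧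
      minorW k n P S = C ε * L.prod ∧
      ∀ f ∈ L,
        (∃ (p : Fin k) (v : ZMod n), f = X (p, v)) ∨
        (∃ (p q : Fin k) (e : ZMod n), p ≠ q ∧
          ((P p).1 = e ∨ (P p).2 = e) ∧ ((P q).1 = e ∨ (P q).2 = e) ∧
          f = X (p, e) * X (q, e + 1) - X (p, e + 1) * X (q, e)) := by

  exact wl_core k n P hW a S hS
end

section
/- Let W = (𝒫,[n]) be an admissible Wilson loop diagram with k propagators. Then in ℝ[x] the principal ideal generated by R(V(𝒫)) equals the radical of the principal ideal generated by the product ∏_{a=1}^{n} Δ_{I_a}(x) of the Grassmann necklace minors of M_{V(𝒫)}. -/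
open MvPolynomial

/-- `p` is incident to the edge `e`. -/
def IncidentE {n : ℕ} (p : ZMod n × ZMod n) (e : ZMod n) : Prop :=
  p.1 = e ∨ p.2 = e

/-- The endpoint of `p` other than `e`. -/
def otherEnd {n : ℕ} (p : ZMod n × ZMod n) (e : ZMod n) : ZMod n :=
  if p.1 = e then p.2 else p.1

/-- `q : Fin s → Fin k` enumerates the propagators incident to the edge `e`,
ordered by proximity to the vertex `e`, i.e. so that the other endpoints
`j_1, …, j_s` satisfy `j_s <_{e+1} ⋯ <_{e+1} j_1`. -/
def EnumIncident {k n : ℕ} (P : Fin k → ZMod n × ZMod n) (e : ZMod n)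
    (s : ℕ) (q : Fin s → Fin k) : Prop :=
  Function.Injective q ∧
  (∀ r : Fin s, IncidentE (P (q r)) e) ∧
  (∀ i : Fin k, IncidentE (P i) e → ∃ r : Fin s, q r = i) ∧
  (∀ r r' : Fin s, r < r' →
    keyW (e + 1) (otherEnd (P (q r')) e) < keyW (e + 1) (otherEnd (P (q r)) e))

/-- The polynomial
`R_e = x_{q₁,e+1} · (∏_{r=1}^{s-1} (x_{q_r,e} x_{q_{r+1},e+1} − x_{q_r,e+1} x_{q_{r+1},e})) · x_{q_s,e}`,
with `R_e = 1` when no propagator is incident to `e`. -/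
noncomputable def Redge (k n : ℕ) (e : ZMod n) (s : ℕ) (q : Fin s → Fin k) :
    WR k n :=
  if h : s = 0 then 1 else
    have hs : 0 < s := Nat.pos_of_ne_zero h
    X (q ⟨0, hs⟩, e + 1) *
      (∏ r : Fin (s - 1),
        (X (q ⟨r.1, by have := r.2; omega⟩, e) *
            X (q ⟨r.1 + 1, by have := r.2; omega⟩, e + 1) -
          X (q ⟨r.1, by have := r.2; omega⟩, e + 1) *
            X (q ⟨r.1 + 1, by have := r.2; omega⟩, e))) *
      X (q ⟨s - 1, by omega⟩, e)


/-- noncrossing structure on corners 1..n -/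
structure Diss (n : ℕ) (Dg : Finset (ℕ × ℕ)) : Prop where
  lo : ∀ p ∈ Dg, 1 ≤ p.1
  hi : ∀ p ∈ Dg, p.2 ≤ n
  far : ∀ p ∈ Dg, p.1 + 2 ≤ p.2
  ne : (1, n) ∉ Dg
  nc : ∀ p ∈ Dg, ∀ q ∈ Dg, p.1 < q.1 → q.1 < p.2 → p.2 < q.2 → False

def EE (n : ℕ) (Dg : Finset (ℕ × ℕ)) (x y : ℕ) : Prop :=
  1 ≤ x ∧ x < y ∧ y ≤ n ∧ (y = x + 1 ∨ (x, y) ∈ Dg ∨ (x = 1 ∧ y = n))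

inductive InfC (n : ℕ) (Dg : Finset (ℕ × ℕ)) (s : ℕ) : ℕ → Prop
  | base (c : ℕ) : 1 ≤ c → c ≤ s → InfC n Dg s c
  | r1 (o x c : ℕ) : o < x → x < c → EE n Dg o c → EE n Dg x c →
      (∀ y, o < y → y < x → ¬ EE n Dg y c) → InfC n Dg s o → InfC n Dg s x → InfC n Dg s c
  | r2 (x c o : ℕ) : x < c → c < o → EE n Dg x c → EE n Dg c o →
      (∀ y, y < x → ¬ EE n Dg y c) → (∀ y, o < y → ¬ EE n Dg c y) →
      InfC n Dg s o → InfC n Dg s x → InfC n Dg s c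

theorem InfC.mono {n : ℕ} {Dg : Finset (ℕ × ℕ)} {s s' : ℕ} (h : s ≤ s') {c : ℕ}
    (hc : InfC n Dg s c) : InfC n Dg s' c := by
  induction hc with
  | base c h1 h2 => exact .base c h1 (h2.trans h)
  | r1 o x c a1 a2 a3 a4 a5 _ _ i1 i2 => exact .r1 o x c a1 a2 a3 a4 a5 i1 i2
  | r2 x c o a1 a2 a3 a4 a5 a6 _ _ i1 i2 => exact .r2 x c o a1 a2 a3 a4 a5 a6 i1 i2

theorem EE_nc {n : ℕ} {Dg : Finset (ℕ × ℕ)} (H : Diss n Dg) {x y x' y' : ℕ}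
    (h : EE n Dg x y) (h' : EE n Dg x' y') (a : x < x') (b : x' < y) (c : y < y') : False := by
  obtain ⟨h1, h2, h3, h4⟩ := h
  obtain ⟨g1, g2, g3, g4⟩ := h'
  rcases h4 with h4 | h4 | h4
  · omega
  · rcases g4 with g4 | g4 | g4
    · omega
    · exact H.nc _ h4 _ g4 a b c
    · omega
  · omega

theorem Dg_EE {n : ℕ} {Dg : Finset (ℕ × ℕ)} (H : Diss n Dg) {x y : ℕ}
    (h : (x, y) ∈ Dg) : EE n Dg x y := by
  have h1 := H.lo _ h
  have h2 := H.hi _ h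
  have h3 := H.far _ h
  exact ⟨h1, by simp at *; omega, h2, Or.inr (Or.inl h)⟩

open Classical in
noncomputable def dcc (n : ℕ) (Dg : Finset (ℕ × ℕ)) (u v : ℕ) : ℕ :=
  ((Finset.Ioc u v).filter (fun t => InfC n Dg (t - 1) t)).card

open Classical in
noncomputable def dco (n : ℕ) (Dg : Finset (ℕ × ℕ)) (u v : ℕ) : ℕ :=
  ((Finset.Ioo u v).filter (fun t => InfC n Dg (t - 1) t)).card

def dg (Dg : Finset (ℕ × ℕ)) (u v : ℕ) : ℕ :=
  (Dg.filter (fun p => u ≤ p.1 ∧ p.2 ≤ v)).card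

theorem dcc_add {n : ℕ} {Dg : Finset (ℕ × ℕ)} {u w v : ℕ} (h : u ≤ w) (h' : w ≤ v) :
    dcc n Dg u w + dcc n Dg w v = dcc n Dg u v := by
  classical
  unfold dcc
  rw [← Finset.card_union_of_disjoint, ← Finset.filter_union, Finset.Ioc_union_Ioc_eq_Ioc h h']
  rw [Finset.disjoint_left]
  intro x hx hx'
  simp at hx hx'
  omega

theorem dcc_dco_add {n : ℕ} {Dg : Finset (ℕ × ℕ)} {u w v : ℕ} (h : u ≤ w) (h' : w < v) :
    dcc n Dg u w + dco n Dg w v = dco n Dg u v := by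
  classical
  unfold dcc dco
  rw [← Finset.card_union_of_disjoint, ← Finset.filter_union]
  · congr 2
    ext x
    simp
    omega
  rw [Finset.disjoint_left]
  intro x hx hx'
  simp at hx hx'
  omega

theorem dcc_le_dco {n : ℕ} {Dg : Finset (ℕ × ℕ)} {u v : ℕ} :
    dcc n Dg u v ≤ dco n Dg u v + 1 := by
  classical
  unfold dcc dco
  have : (Finset.Ioc u v).filter (fun t => InfC n Dg (t - 1) t) ⊆
      insert v ((Finset.Ioo u v).filter (fun t => InfC n Dg (t - 1) t)) := by
    intro x
    simp
    intro h1 h2 h3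
    by_cases hx : x = v
    · exact Or.inl hx
    · exact Or.inr ⟨⟨h1, by omega⟩, h3⟩
  exact (Finset.card_le_card this).trans (Finset.card_insert_le _ _)

theorem dco_lt_dcc {n : ℕ} {Dg : Finset (ℕ × ℕ)} {u v : ℕ} (huv : u < v)
    (h : InfC n Dg u v) : dco n Dg u v + 1 ≤ dcc n Dg u v := by
  classical
  unfold dcc dco
  rw [← Finset.card_insert_of_notMem (a := v)]
  · apply Finset.card_le_card
    intro x
    simp
    rintro (rfl | ⟨⟨h1, h2⟩, h3⟩)
    · exact ⟨⟨huv, le_rfl⟩, h.mono (by omega)⟩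
    · exact ⟨⟨h1, h2.le⟩, h3⟩
  · simp

/-- generic splitting -/
theorem dg_split {Dg : Finset (ℕ × ℕ)} {u w v : ℕ}
    (h : ∀ x y, (x, y) ∈ Dg → u ≤ x → y ≤ v → (u ≤ x ∧ y ≤ w) ∨ (w ≤ x ∧ y ≤ v)) :
    dg Dg u v ≤ dg Dg u w + dg Dg w v := by
  unfold dg
  refine le_trans (Finset.card_le_card ?_) (Finset.card_union_le _ _)
  rintro ⟨x, y⟩
  simp only [Finset.mem_filter, Finset.mem_union]
  rintro ⟨h1, h2, h3⟩
  rcases h x y h1 h2 h3 with h4 | h4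
  · exact Or.inl ⟨h1, h4⟩
  · exact Or.inr ⟨h1, h4⟩

theorem dg_split1 {Dg : Finset (ℕ × ℕ)} {u w v : ℕ}
    (h : ∀ x y, (x, y) ∈ Dg → u ≤ x → y ≤ v →
      (u ≤ x ∧ y ≤ w) ∨ (w ≤ x ∧ y ≤ v) ∨ (x = u ∧ y = v)) :
    dg Dg u v ≤ dg Dg u w + dg Dg w v + 1 := by
  unfold dg
  have : Dg.filter (fun p => u ≤ p.1 ∧ p.2 ≤ v) ⊆
    insert (u, v) (Dg.filter (fun p => u ≤ p.1 ∧ p.2 ≤ w) ∪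
      Dg.filter (fun p => w ≤ p.1 ∧ p.2 ≤ v)) := by
    rintro ⟨x, y⟩
    simp only [Finset.mem_filter, Finset.mem_union, Finset.mem_insert]
    rintro ⟨h1, h2, h3⟩
    rcases h x y h1 h2 h3 with h4 | h4 | h4
    · exact Or.inr (Or.inl ⟨h1, h4⟩)
    · exact Or.inr (Or.inr ⟨h1, h4⟩)
    · exact Or.inl (by rw [h4.1, h4.2])
  refine (Finset.card_le_card this).trans ((Finset.card_insert_le _ _).trans ?_)
  exact Nat.succ_le_succ (Finset.card_union_le _ _)

theorem dg_small {n : ℕ} {Dg : Finset (ℕ × ℕ)} (H : Diss n Dg) {u v : ℕ} (h : v ≤ u + 1) :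
    dg Dg u v = 0 := by
  unfold dg
  rw [Finset.card_eq_zero, Finset.filter_eq_empty_iff]
  intro p hp hh
  have := H.far p hp
  omega

theorem exists_max_nbr {n : ℕ} {Dg : Finset (ℕ × ℕ)} {u v : ℕ} (hu : 1 ≤ u) (huv : u + 2 ≤ v)
    (hv : v ≤ n) : ∃ w, u < w ∧ w < v ∧ EE n Dg u w ∧ ∀ y, w < y → y < v → ¬ EE n Dg u y := by
  classical
  set S := (Finset.Ioo u v).filter (fun w => EE n Dg u w) with hS
  have hne : S.Nonempty := ⟨u + 1, by
    simp only [hS, Finset.mem_filter, Finset.mem_Ioo]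
    exact ⟨by omega, hu, by omega, by omega, Or.inl rfl⟩⟩
  have hm := S.max'_mem hne
  simp only [hS, Finset.mem_filter, Finset.mem_Ioo] at hm
  refine ⟨_, hm.1.1, hm.1.2, hm.2, ?_⟩
  intro y hy hyv hE
  have : y ≤ S.max' hne := S.le_max' y (by
    simp only [hS, Finset.mem_filter, Finset.mem_Ioo]
    exact ⟨⟨hE.2.1, hyv⟩, hE⟩)
  simp only [hS] at this hy
  omega

theorem exists_min_nbr {n : ℕ} {Dg : Finset (ℕ × ℕ)} {w v : ℕ} (hw : 1 ≤ w) (hwv : w < v)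
    (hv : v ≤ n) : ∃ x, w ≤ x ∧ x < v ∧ EE n Dg x v ∧ ∀ y, w ≤ y → y < x → ¬ EE n Dg y v := by
  classical
  set S := (Finset.Ico w v).filter (fun x => EE n Dg x v) with hS
  have hne : S.Nonempty := ⟨v - 1, by
    simp only [hS, Finset.mem_filter, Finset.mem_Ico]
    exact ⟨by omega, by omega, by omega, by omega, Or.inl (by omega)⟩⟩
  have hm := S.min'_mem hne
  simp only [hS, Finset.mem_filter, Finset.mem_Ico] at hm
  refine ⟨_, hm.1.1, hm.1.2, hm.2, ?_⟩
  intro y hy hyv hE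
  have : S.min' hne ≤ y := S.min'_le y (by
    simp only [hS, Finset.mem_filter, Finset.mem_Ico]
    exact ⟨⟨hy, hE.2.1⟩, hE⟩)
  simp only [hS] at this hyv
  omega

/-- a hub `o` outside `[w,v]` joined to both ends -/
def Hub (n : ℕ) (Dg : Finset (ℕ × ℕ)) (w v o : ℕ) : Prop :=
  (o < w ∧ EE n Dg o w ∧ EE n Dg o v) ∨ (v < o ∧ EE n Dg w o ∧ EE n Dg v o)

theorem hub_inf {n : ℕ} {Dg : Finset (ℕ × ℕ)} (H : Diss n Dg) {w v o x : ℕ}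
    (hub : Hub n Dg w v o) (hwx : w ≤ x) (hxv : x < v) (hE : EE n Dg x v)
    (hmin : ∀ y, w ≤ y → y < x → ¬ EE n Dg y v) (hw : 1 ≤ w) (ho : InfC n Dg w o) :
    InfC n Dg x v := by
  have ho' := ho.mono hwx
  have hx : InfC n Dg x x := .base x (by omega) le_rfl
  rcases hub with ⟨h1, h2, h3⟩ | ⟨h1, h2, h3⟩
  · refine .r1 o x v (by omega) hxv h3 hE ?_ ho' hx
    intro y hy1 hy2 hy
    by_cases hyw : w ≤ y
    · exact hmin y hyw hy2 hy
    · exact EE_nc H h2 hy hy1 (by omega) (by omega)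
  · refine .r2 x v o hxv h1 hE h3 ?_ ?_ ho' hx
    · intro y hy1 hy
      by_cases hyw : w ≤ y
      · exact hmin y hyw hy1 hy
      · exact EE_nc H hy h2 (by omega) (by omega) (by omega)
    · intro y hy1 hy
      exact EE_nc H h2 hy (by omega) (by omega) (by omega)

theorem main_count {n : ℕ} {Dg : Finset (ℕ × ℕ)} (H : Diss n Dg) (m : ℕ) :
    (∀ u v, 1 ≤ u → u ≤ v → v ≤ n → v - u ≤ m → dg Dg u v ≤ dcc n Dg u v) ∧
    (∀ u v, EE n Dg u v → InfC n Dg u v → v - u ≤ m → dg Dg u v ≤ dco n Dg u v) ∧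
    (∀ w v o, 1 ≤ w → w < v → v ≤ n → Hub n Dg w v o → InfC n Dg w o → v - w ≤ m →
      dg Dg w v + 1 ≤ dcc n Dg w v) := by
  induction m with
  | zero =>
    refine ⟨?_, ?_, ?_⟩
    · intro u v h1 h2 h3 h4
      rw [dg_small H (by omega)]; exact Nat.zero_le _
    · intro u v h1 h2 h3
      rw [dg_small H (by omega)]; exact Nat.zero_le _
    · intro w v o h1 h2; omega
  | succ m ih =>
    obtain ⟨iA, iB, iC⟩ := ih
    have hB : ∀ u v, EE n Dg u v → InfC n Dg u v → v - u ≤ m + 1 →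
        dg Dg u v ≤ dco n Dg u v := by
      intro x v hE hI hm
      by_cases hs : v ≤ x + 1
      · rw [dg_small H hs]; exact Nat.zero_le _
      have hx1 := hE.1
      have hvn := hE.2.2.1
      obtain ⟨y, hy1, hy2, hy3, hy4⟩ := exists_min_nbr (Dg := Dg) (w := x + 1) (v := v) (n := n)
        (by omega) (by omega) hvn
      have c1 := iC x y v hx1 (by omega) (by omega) (Or.inr ⟨hy2, hE, hy3⟩) hI (by omega)
      have hIy : InfC n Dg y v := hI.mono (by omega)
      have c2 := iB y v hy3 hIy (by omega)
      have c3 := dcc_dco_add (n := n) (Dg := Dg) (u := x) (w := y) (v := v) (by omega) hy2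
      have c4 : dg Dg x v ≤ dg Dg x y + dg Dg y v + 1 := by
        apply dg_split1
        intro p q hpq hp hq
        have hpE := Dg_EE H hpq
        have hlt := hpE.2.1
        by_cases h1 : q ≤ y
        · exact Or.inl ⟨hp, h1⟩
        by_cases h2 : y ≤ p
        · exact Or.inr (Or.inl ⟨h2, hq⟩)
        by_cases h3 : q = v
        · subst h3
          by_cases h4 : p = x
          · exact Or.inr (Or.inr ⟨h4, rfl⟩)
          · exact absurd hpE (hy4 p (by omega) (by omega))
        · exact (EE_nc H hpE hy3 (by omega) (by omega) (by omega)).elim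
      omega
    have hC : ∀ w v o, 1 ≤ w → w < v → v ≤ n → Hub n Dg w v o → InfC n Dg w o →
        v - w ≤ m + 1 → dg Dg w v + 1 ≤ dcc n Dg w v := by
      intro w v o hw hwv hvn hub hI hm
      obtain ⟨x, hx1, hx2, hx3, hx4⟩ := exists_min_nbr (Dg := Dg) (w := w) (v := v) (n := n)
        hw hwv hvn
      have hIx := hub_inf H hub hx1 hx2 hx3 hx4 hw hI
      have c1 := iA w x hw hx1 (by omega) (by omega)
      have c2 := hB x v hx3 hIx (by omega)
      have c3 := dco_lt_dcc hx2 hIx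
      have c4 := dcc_add (n := n) (Dg := Dg) hx1 hx2.le
      have c5 : dg Dg w v ≤ dg Dg w x + dg Dg x v := by
        apply dg_split
        intro p q hpq hp hq
        have hpE := Dg_EE H hpq
        have hlt := hpE.2.1
        by_cases h1 : q ≤ x
        · exact Or.inl ⟨hp, h1⟩
        by_cases h2 : x ≤ p
        · exact Or.inr ⟨h2, hq⟩
        by_cases h3 : q = v
        · subst h3
          exact absurd hpE (hx4 p (by omega) (by omega))
        · exact (EE_nc H hpE hx3 (by omega) (by omega) (by omega)).elim
      omega
    refine ⟨?_, hB, hC⟩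
    intro u v hu huv hvn hm
    by_cases hs : v ≤ u + 1
    · rw [dg_small H hs]; exact Nat.zero_le _
    obtain ⟨w, hw1, hw2, hw3, hw4⟩ := exists_max_nbr (Dg := Dg) (u := u) (v := v) (n := n)
        hu (by omega) hvn
    have c1 := iA u w hu hw1.le (by omega) (by omega)
    have c4 := dcc_add (n := n) (Dg := Dg) hw1.le hw2.le
    by_cases hd : (u, v) ∈ Dg
    · have hE := Dg_EE H hd
      have c2 := iC w v u (by omega) hw2 hvn (Or.inl ⟨hw1, hw3, hE⟩)
        (.base u hu hw1.le) (by omega)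
      have c5 : dg Dg u v ≤ dg Dg u w + dg Dg w v + 1 := by
        apply dg_split1
        intro p q hpq hp hq
        have hpE := Dg_EE H hpq
        have hlt := hpE.2.1
        by_cases h1 : q ≤ w
        · exact Or.inl ⟨hp, h1⟩
        by_cases h2 : w ≤ p
        · exact Or.inr (Or.inl ⟨h2, hq⟩)
        by_cases h3 : p = u
        · subst h3
          by_cases h4 : q = v
          · exact Or.inr (Or.inr ⟨rfl, h4⟩)
          · exact absurd hpE (hw4 q (by omega) (by omega))
        · exact (EE_nc H hw3 hpE (by omega) (by omega) (by omega)).elim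
      omega
    · have c2 := iA w v (by omega) hw2.le hvn (by omega)
      have c5 : dg Dg u v ≤ dg Dg u w + dg Dg w v := by
        apply dg_split
        intro p q hpq hp hq
        have hpE := Dg_EE H hpq
        have hlt := hpE.2.1
        by_cases h1 : q ≤ w
        · exact Or.inl ⟨hp, h1⟩
        by_cases h2 : w ≤ p
        · exact Or.inr ⟨h2, hq⟩
        by_cases h3 : p = u
        · subst h3
          by_cases h4 : q = v
          · subst h4; exact absurd hpq hd
          · exact absurd hpE (hw4 q (by omega) (by omega))
        · exact (EE_nc H hw3 hpE (by omega) (by omega) (by omega)).elim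
      omega

/-- diagonals of the sub-polygon on `{1} ∪ [h,n]`, other than `(1,h)` -/
def gset (Dg : Finset (ℕ × ℕ)) (h : ℕ) : Finset (ℕ × ℕ) :=
  Dg.filter (fun p => (p.1 = 1 ∧ h < p.2) ∨ h ≤ p.1)

theorem count_G' {n : ℕ} {Dg : Finset (ℕ × ℕ)} (H : Diss n Dg) (m : ℕ) :
    ∀ h, 2 ≤ h → h ≤ n → EE n Dg 1 h → n - h ≤ m → (gset Dg h).card ≤ dco n Dg h n := by
  induction m with
  | zero =>
    intro h h2 hn hE hm
    have : gset Dg h = ∅ := by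
      unfold gset
      rw [Finset.filter_eq_empty_iff]
      intro p hp hh
      have := H.far p hp
      have := H.hi p hp
      omega
    rw [this]; simp
  | succ m ih =>
    intro h h2 hn hE hm
    by_cases hhn : n ≤ h
    · exact ih h h2 hn hE (by omega)
    classical
    -- next neighbour of 1
    obtain ⟨v, hv1, hv2, hv3, hv4⟩ : ∃ v, h < v ∧ v ≤ n ∧ EE n Dg 1 v ∧
        ∀ y, h < y → y < v → ¬ EE n Dg 1 y := by
      have hex : ∃ v, h < v ∧ EE n Dg 1 v :=
        ⟨n, by omega, le_rfl, by omega, le_rfl, Or.inr (Or.inr ⟨rfl, rfl⟩)⟩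
      refine ⟨Nat.find hex, (Nat.find_spec hex).1, (Nat.find_spec hex).2.2.2.1,
        (Nat.find_spec hex).2, ?_⟩
      intro y hy1 hy2 hy
      exact Nat.find_min hex hy2 ⟨hy1, hy⟩
    have c1 := (main_count H n).2.2 h v 1 (by omega) hv1 hv2 (Or.inl ⟨by omega, hE, hv3⟩)
      (.base 1 le_rfl (by omega)) (by omega)
    by_cases hvn : v = n
    · subst hvn
      have c2 := dcc_le_dco (n := v) (Dg := Dg) (u := h) (v := v)
      have c3 : (gset Dg h).card ≤ dg Dg h v := by
        unfold gset dg
        apply Finset.card_le_card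
        rintro ⟨p, q⟩
        simp only [Finset.mem_filter]
        rintro ⟨hpq, hh⟩
        have hpE := Dg_EE H hpq
        refine ⟨hpq, ?_, H.hi _ hpq⟩
        rcases hh with ⟨hp, hq⟩ | hh
        · subst hp
          by_cases hqv : q = v
          · subst hqv; exact absurd hpq H.ne
          · exact absurd hpE (hv4 q hq (by have := hpE.2.2.1; omega))
        · exact hh
      omega
    · have c2 := ih v (by omega) hv2 hv3 (by omega)
      have c3 := dcc_dco_add (n := n) (Dg := Dg) (u := h) (w := v) (v := n) hv1.le (by omega)
      have c4 : (gset Dg h).card ≤ dg Dg h v + (gset Dg v).card + 1 := by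
        have hsub : gset Dg h ⊆ insert (1, v)
            (Dg.filter (fun p => h ≤ p.1 ∧ p.2 ≤ v) ∪ gset Dg v) := by
          unfold gset
          rintro ⟨p, q⟩
          simp only [Finset.mem_filter, Finset.mem_union, Finset.mem_insert]
          rintro ⟨hpq, hh⟩
          have hpE := Dg_EE H hpq
          have hlt := hpE.2.1
          rcases hh with ⟨hp, hq⟩ | hh
          · subst hp
            by_cases h3 : q = v
            · exact Or.inl (by rw [h3])
            · by_cases h4 : q < v
              · exact absurd hpE (hv4 q hq h4)
              · exact Or.inr (Or.inr ⟨hpq, Or.inl ⟨rfl, by omega⟩⟩)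
          · by_cases h3 : q ≤ v
            · exact Or.inr (Or.inl ⟨hpq, hh, h3⟩)
            · by_cases h4 : v ≤ p
              · exact Or.inr (Or.inr ⟨hpq, Or.inr h4⟩)
              · exact (EE_nc H hv3 hpE (by omega) (by omega) (by omega)).elim
        refine (Finset.card_le_card hsub).trans ((Finset.card_insert_le _ _).trans ?_)
        exact Nat.succ_le_succ (Finset.card_union_le _ _)
      omega

theorem count_total {n : ℕ} {Dg : Finset (ℕ × ℕ)} (H : Diss n Dg) (hn : 2 ≤ n) :
    Dg.card ≤ dco n Dg 2 n := by
  have := count_G' H n 2 le_rfl hn ⟨le_rfl, by omega, hn, Or.inl rfl⟩ (by omega)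
  refine le_trans (Finset.card_le_card ?_) this
  intro p hp
  unfold gset
  rw [Finset.mem_filter]
  refine ⟨hp, ?_⟩
  have := H.lo p hp
  have := H.far p hp
  omega

theorem count_G {n : ℕ} {Dg : Finset (ℕ × ℕ)} (H : Diss n Dg) {y h : ℕ} (hy : 2 ≤ y)
    (hyh : y < h) (hE : EE n Dg y h) (hE1 : EE n Dg 1 h)
    (hcons : ∀ c, 1 < c → c < y → ¬ EE n Dg c h) : (gset Dg y).card ≤ dco n Dg y n := by
  have hhn := hE.2.2.1
  have hI : InfC n Dg y h := .r1 1 y h (by omega) hyh hE1 hE hcons (.base 1 le_rfl (by omega))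
    (.base y (by omega) le_rfl)
  have c1 := (main_count H n).2.1 y h hE hI (by omega)
  by_cases hn : h = n
  · subst hn
    refine le_trans (Finset.card_le_card ?_) c1
    unfold gset
    rintro ⟨p, q⟩
    simp only [Finset.mem_filter]
    rintro ⟨hpq, hh⟩
    have hpE := Dg_EE H hpq
    have hq := hpE.2.2.1
    refine ⟨hpq, ?_, hq⟩
    rcases hh with ⟨hp, hq⟩ | hh
    · subst hp
      by_cases hqv : q = h
      · subst hqv; exact absurd hpq H.ne
      · exact (EE_nc H hpE hE (by omega) (by omega) (by omega)).elim
    · exact hh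
  · have c2 := count_G' H n h (by omega) hhn hE1 (by omega)
    have c3 := dcc_dco_add (n := n) (Dg := Dg) (u := y) (w := h) (v := n) hyh.le (by omega)
    have c4 := dco_lt_dcc hyh hI
    have c5 : (gset Dg y).card ≤ dg Dg y h + (gset Dg h).card + 1 := by
      have hsub : gset Dg y ⊆ insert (1, h)
          (Dg.filter (fun p => y ≤ p.1 ∧ p.2 ≤ h) ∪ gset Dg h) := by
        unfold gset
        rintro ⟨p, q⟩
        simp only [Finset.mem_filter, Finset.mem_union, Finset.mem_insert]
        rintro ⟨hpq, hh⟩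
        have hpE := Dg_EE H hpq
        have hlt := hpE.2.1
        rcases hh with ⟨hp, hq⟩ | hh
        · subst hp
          by_cases h3 : q = h
          · exact Or.inl (by rw [h3])
          · by_cases h4 : q < h
            · exact (EE_nc H hpE hE (by omega) (by omega) (by omega)).elim
            · exact Or.inr (Or.inr ⟨hpq, Or.inl ⟨rfl, by omega⟩⟩)
        · by_cases h3 : q ≤ h
          · exact Or.inr (Or.inl ⟨hpq, hh, h3⟩)
          · by_cases h4 : h ≤ p
            · exact Or.inr (Or.inr ⟨hpq, Or.inr h4⟩)
            · exact (EE_nc H hE1 hpE (by omega) (by omega) (by omega)).elim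
      refine (Finset.card_le_card hsub).trans ((Finset.card_insert_le _ _).trans ?_)
      exact Nat.succ_le_succ (Finset.card_union_le _ _)
    omega

set_option linter.unusedSectionVars false

structure Good {k n : ℕ} (P : Fin k → ZMod n × ZMod n) : Prop where
  n4 : k + 4 ≤ n
  h12 : ∀ i, (P i).1 ≠ (P i).2
  h121 : ∀ i, (P i).1 ≠ (P i).2 + 1
  h211 : ∀ i, (P i).2 ≠ (P i).1 + 1
  inj : ∀ i i', P i = P i' → i = i'
  injs : ∀ i i', P i = (P i').swap → i = i'
  nc : ∀ i i', ¬ Cross (P i) (P i')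

theorem card4 {α : Type*} [DecidableEq α] {a b c d : α} (h : 4 ≤ ({a, b, c, d} : Finset α).card) :
    a ≠ c ∧ a ≠ d ∧ b ≠ c := by
  refine ⟨?_, ?_, ?_⟩
  · rintro rfl
    have : ({a, b, a, d} : Finset α) = {a, b, d} := by ext; simp; tauto
    rw [this] at h
    have := Finset.card_le_three (a := a) (b := b) (c := d)
    omega
  · rintro rfl
    have : ({a, b, c, a} : Finset α) = {a, b, c} := by ext; simp; tauto
    rw [this] at h
    have := Finset.card_le_three (a := a) (b := b) (c := c)
    omega
  · rintro rfl
    have : ({a, b, b, d} : Finset α) = {a, b, d} := by ext; simp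
    rw [this] at h
    have := Finset.card_le_three (a := a) (b := b) (c := d)
    omega

theorem propSupp_swap {n : ℕ} (p : ZMod n × ZMod n) : propSupp p.swap = propSupp p := by
  ext; simp [propSupp]; tauto

theorem Good.of_adm {k n : ℕ} {P : Fin k → ZMod n × ZMod n}
    (hW : Admissible n (Multiset.map P Finset.univ.val)) : Good P := by
  obtain ⟨h1, h2, h3⟩ := hW
  have hs : ∀ i, 4 ≤ (propSupp (P i)).card := by
    intro i
    have := h2 {P i} (by simp) (by simp)
    simpa [multiSupp] using this
  have hd : ∀ i i', propSupp (P i) = propSupp (P i') → i = i' := by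
    intro i i' h
    by_contra hne
    have := h2 (Multiset.map P ({i, i'} : Finset (Fin k)).val)
      (Multiset.map_le_map (Finset.val_le_iff.2 (Finset.subset_univ _)))
      (by rw [Ne, Multiset.map_eq_zero, Finset.val_eq_zero]; exact Finset.insert_ne_empty _ _)
    have e : ({i, i'} : Finset (Fin k)).val = {i} + {i'} := by
      rw [Finset.insert_val_of_notMem (by simpa using hne)]; simp
    rw [e] at this
    simp [multiSupp, h] at this
    have h4 : (propSupp (P i')).card ≤ 4 := Finset.card_le_four
    omega
  refine ⟨by simpa using h3, ?_, ?_, ?_, ?_, ?_, ?_⟩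
  · intro i; exact (card4 (hs i)).1
  · intro i; exact (card4 (hs i)).2.1
  · intro i; exact (card4 (hs i)).2.2.symm
  · intro i i' h; exact hd _ _ (by rw [h])
  · intro i i' h; exact hd _ _ (by rw [h, propSupp_swap])
  · intro i i'; exact h1 _ (by simp) _ (by simp)

def cr {n : ℕ} (a e : ZMod n) : ℕ := (a - 2 - e).val + 1
def ed {n : ℕ} (a : ZMod n) (c : ℕ) : ZMod n := a - 1 - c

section
variable {n : ℕ} [NeZero n]

theorem cr_pos (a e : ZMod n) : 1 ≤ cr a e := by unfold cr; omega
theorem cr_le (a e : ZMod n) : cr a e ≤ n := by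
  unfold cr; have := ZMod.val_lt (a - 2 - e); omega
theorem ed_cr (a e : ZMod n) : ed a (cr a e) = e := by
  unfold ed cr; push_cast; simp; ring
theorem cr_ed (a : ZMod n) {c : ℕ} (h1 : 1 ≤ c) (h2 : c ≤ n) : cr a (ed a c) = c := by
  obtain ⟨d, rfl⟩ : ∃ d, c = d + 1 := ⟨c - 1, by omega⟩
  unfold ed cr
  have : a - 2 - (a - 1 - ((d + 1 : ℕ) : ZMod n)) = (d : ZMod n) := by push_cast; ring
  rw [this, ZMod.val_cast_of_lt (by omega)]

theorem val_sub' (u w : ZMod n) : (u - w).val = if w.val ≤ u.val then u.val - w.val else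
    n + u.val - w.val := by
  split_ifs with h
  · exact ZMod.val_sub h
  · push Not at h
    have h0 : w - u ≠ 0 := by
      intro h'; rw [sub_eq_zero] at h'; subst h'; omega
    have : u - w = -(w - u) := by ring
    have hz : NeZero (w - u) := ⟨h0⟩
    rw [this, ZMod.val_neg_of_ne_zero, ZMod.val_sub h.le]
    have := ZMod.val_lt w
    omega

theorem val_sub_cr (a e1 e2 : ZMod n) : (e1 - e2).val =
    if cr a e1 ≤ cr a e2 then cr a e2 - cr a e1 else n + cr a e2 - cr a e1 := by
  have : e1 - e2 = (a - 2 - e2) - (a - 2 - e1) := by ring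
  rw [this, val_sub']
  unfold cr
  simp only [add_le_add_iff_right, Nat.add_sub_add_right, ]
  split_ifs <;> omega

theorem cr_inj {a e1 e2 : ZMod n} (h : cr a e1 = cr a e2) : e1 = e2 := by
  rw [← ed_cr a e1, h, ed_cr]

theorem key_succ (a e j : ZMod n) (hj : j ≠ e) : keyW (e + 1) j =
    if cr a j < cr a e then cr a e - cr a j - 1 else n + cr a e - cr a j - 1 := by
  have h1 : (j - (e+1)) = (j - e) - 1 := by ring
  have h2 := val_sub_cr a j e
  have h0 : (j - e).val ≠ 0 := by rw [Ne, ZMod.val_eq_zero, sub_eq_zero]; exact hj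
  have hn : 1 < n ∨ n = 1 := by have := NeZero.ne n; omega
  rcases hn with hn | hn
  · unfold keyW
    have : Fact (1 < n) := ⟨hn⟩
    rw [h1, ZMod.val_sub (by rw [ZMod.val_one]; omega), ZMod.val_one, h2]
    have : cr a j ≠ cr a e := fun h => hj (cr_inj h)
    split_ifs <;> omega
  · subst hn; exact absurd (Subsingleton.elim _ _) hj

def DG {k n : ℕ} (P : Fin k → ZMod n × ZMod n) (a : ZMod n) : Finset (ℕ × ℕ) :=
  Finset.univ.image (fun i => (min (cr a (P i).1) (cr a (P i).2), max (cr a (P i).1) (cr a (P i).2)))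

theorem ne_vals {e1 e2 : ZMod n} (hn : 2 ≤ n) (h : e1 ≠ e2 + 1) : (e1 - e2).val ≠ 1 := by
  intro h'
  apply h
  have : Fact (1 < n) := ⟨by omega⟩
  have : e1 - e2 = 1 := ZMod.val_injective n (by rw [h', ZMod.val_one])
  rw [← this]; ring

theorem DG_diss {k : ℕ} {P : Fin k → ZMod n × ZMod n} (G : Good P) (a : ZMod n) :
    Diss n (DG P a) := by
  have key : ∀ i, cr a (P i).1 ≠ cr a (P i).2 ∧ (((P i).1 - (P i).2).val ≠ 1) ∧
      (((P i).2 - (P i).1).val ≠ 1) := fun i =>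
    ⟨fun h => G.h12 i (cr_inj h), ne_vals (by have := G.n4; omega) (G.h121 i),
      ne_vals (by have := G.n4; omega) (G.h211 i)⟩
  have n4 := G.n4
  constructor
  · intro p hp
    simp only [DG, Finset.mem_image, Finset.mem_univ, true_and] at hp
    obtain ⟨i, rfl⟩ := hp
    have := cr_pos a (P i).1; have := cr_pos a (P i).2; simp; omega
  · intro p hp
    simp only [DG, Finset.mem_image, Finset.mem_univ, true_and] at hp
    obtain ⟨i, rfl⟩ := hp
    have := cr_le a (P i).1; have := cr_le a (P i).2; simp; omega
  · intro p hp
    simp only [DG, Finset.mem_image, Finset.mem_univ, true_and] at hp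
    obtain ⟨i, rfl⟩ := hp
    obtain ⟨h1, h2, h3⟩ := key i
    rw [val_sub_cr a] at h2 h3
    simp only
    split_ifs at * <;> omega
  · intro hp
    simp only [DG, Finset.mem_image, Finset.mem_univ, true_and, Prod.mk.injEq] at hp
    obtain ⟨i, hi⟩ := hp
    obtain ⟨h1, h2, h3⟩ := key i
    rw [val_sub_cr a] at h2 h3
    split_ifs at * <;> omega
  · intro p hp p' hp' l1 l2 l3
    simp only [DG, Finset.mem_image, Finset.mem_univ, true_and] at hp hp'
    obtain ⟨i, rfl⟩ := hp
    obtain ⟨j, rfl⟩ := hp'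
    have b1 := cr_pos a (P i).1; have b2 := cr_pos a (P i).2
    have b3 := cr_le a (P i).1; have b4 := cr_le a (P i).2
    have c1 := cr_pos a (P j).1; have c2 := cr_pos a (P j).2
    have c3 := cr_le a (P j).1; have c4 := cr_le a (P j).2
    apply G.nc i j
    simp only [Cross, Inside, val_sub_cr a]
    simp only at l1 l2 l3
    rcases le_total (cr a (P i).1) (cr a (P i).2) with h | h <;>
    rcases le_total (cr a (P j).1) (cr a (P j).2) with h' | h' <;>
    simp only [min_eq_left, min_eq_right, max_eq_left, max_eq_right, h, h'] at l1 l2 l3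
    · right; constructor <;> constructor <;> split_ifs <;> omega
    · left; constructor <;> constructor <;> split_ifs <;> omega
    · left; constructor <;> constructor <;> split_ifs <;> omega
    · right; constructor <;> constructor <;> split_ifs <;> omega

theorem DG_inj {k : ℕ} {P : Fin k → ZMod n × ZMod n} (G : Good P) (a : ZMod n) :
    Function.Injective (fun i => (min (cr a (P i).1) (cr a (P i).2),
      max (cr a (P i).1) (cr a (P i).2))) := by
  intro i j h
  simp only [Prod.mk.injEq] at h
  have : (cr a (P i).1 = cr a (P j).1 ∧ cr a (P i).2 = cr a (P j).2) ∨
      (cr a (P i).1 = cr a (P j).2 ∧ cr a (P i).2 = cr a (P j).1) := by omega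
  rcases this with ⟨h1, h2⟩ | ⟨h1, h2⟩
  · exact G.inj i j (Prod.ext (cr_inj h1) (cr_inj h2))
  · exact G.injs i j (Prod.ext (cr_inj h1) (cr_inj h2))

theorem DG_card {k : ℕ} {P : Fin k → ZMod n × ZMod n} (G : Good P) (a : ZMod n) :
    (DG P a).card = k := by
  unfold DG
  rw [Finset.card_image_of_injective _ (DG_inj G a)]; simp

/-- neighbours of an edge -/
def Nbr {k : ℕ} (P : Fin k → ZMod n × ZMod n) (e j : ZMod n) : Prop :=
  j = e + 1 ∨ e = j + 1 ∨ ∃ i, P i = (e, j) ∨ P i = (j, e)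

theorem Nbr_iff {k : ℕ} {P : Fin k → ZMod n × ZMod n} (hn : 4 ≤ n) (a e j : ZMod n)
    (h : cr a e < cr a j) :
    (Nbr P e j ∨ Nbr P j e) ↔ EE n (DG P a) (cr a e) (cr a j) := by
  have s1 : j = e + 1 ↔ cr a e = 1 ∧ cr a j = n := by
    have hv := val_sub_cr a j e
    have b1 := cr_pos a e; have b2 := cr_le a j
    have : Fact (1 < n) := ⟨by omega⟩
    constructor
    · rintro rfl
      rw [add_sub_cancel_left, ZMod.val_one] at hv
      split_ifs at hv <;> omega
    · intro h'
      have : j - e = 1 := ZMod.val_injective n (by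
        rw [ZMod.val_one, hv]; split_ifs <;> omega)
      rw [← this]; ring
  have s2 : e = j + 1 ↔ cr a j = cr a e + 1 := by
    have hv := val_sub_cr a e j
    have b1 := cr_pos a e; have b2 := cr_le a j
    have : Fact (1 < n) := ⟨by omega⟩
    constructor
    · rintro rfl
      rw [add_sub_cancel_left, ZMod.val_one] at hv
      split_ifs at hv <;> omega
    · intro h'
      have : e - j = 1 := ZMod.val_injective n (by
        rw [ZMod.val_one, hv]; split_ifs <;> omega)
      rw [← this]; ring
  have s3 : (∃ i, P i = (e, j) ∨ P i = (j, e)) ↔ (cr a e, cr a j) ∈ DG P a := by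
    simp only [DG, Finset.mem_image, Finset.mem_univ, true_and, Prod.mk.injEq]
    apply exists_congr
    intro i
    constructor
    · rintro (h' | h') <;> rw [h'] <;> simp <;> omega
    · intro h'
      have : (cr a (P i).1 = cr a e ∧ cr a (P i).2 = cr a j) ∨
        (cr a (P i).1 = cr a j ∧ cr a (P i).2 = cr a e) := by omega
      rcases this with ⟨h1, h2⟩ | ⟨h1, h2⟩
      · left; exact (Prod.ext (cr_inj h1) (cr_inj h2))
      · right; exact (Prod.ext (cr_inj h1) (cr_inj h2))
  have b1 := cr_pos a e; have b2 := cr_le a j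
  have : (∃ i, P i = (e, j) ∨ P i = (j, e)) ↔ (∃ i, P i = (j, e) ∨ P i = (e, j)) :=
    exists_congr fun i => or_comm
  unfold Nbr EE
  rw [← s3, ← this, s1, s2]
  constructor
  · rintro ((h | h | h) | (h | h | h))
    · exact ⟨b1, by omega, b2, Or.inr (Or.inr h)⟩
    · exact ⟨b1, by omega, b2, Or.inl h⟩
    · exact ⟨b1, by omega, b2, Or.inr (Or.inl h)⟩
    · exact ⟨b1, by omega, b2, Or.inl h⟩
    · exact ⟨b1, by omega, b2, Or.inr (Or.inr h)⟩
    · exact ⟨b1, by omega, b2, Or.inr (Or.inl h)⟩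
  · rintro ⟨-, -, -, h | h | h⟩
    · exact Or.inl (Or.inr (Or.inl h))
    · exact Or.inl (Or.inr (Or.inr h))
    · exact Or.inl (Or.inl h)

theorem Nbr_symm {k : ℕ} {P : Fin k → ZMod n × ZMod n} {e j : ZMod n} : Nbr P e j ↔ Nbr P j e := by
  have : (∃ i, P i = (e, j) ∨ P i = (j, e)) ↔ (∃ i, P i = (j, e) ∨ P i = (e, j)) :=
    exists_congr fun i => or_comm
  unfold Nbr; rw [this]; exact or_left_comm

theorem EE_iff {k : ℕ} {P : Fin k → ZMod n × ZMod n} (hn : 4 ≤ n) (a : ZMod n) (x y : ℕ)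
    (hx : 1 ≤ x) (hxy : x < y) (hy : y ≤ n) :
    EE n (DG P a) x y ↔ Nbr P (ed a x) (ed a y) := by
  have h1 := cr_ed a hx (by omega)
  have h2 := cr_ed a (by omega : 1 ≤ y) hy
  have := Nbr_iff (P := P) hn a (ed a x) (ed a y) (by omega)
  rw [h1, h2] at this
  rw [← this, Nbr_symm (e := ed a y), or_self_iff]
end

set_option linter.unusedSectionVars false

def Joins {k n : ℕ} (P : Fin k → ZMod n × ZMod n) (i : Fin k) (e j : ZMod n) : Prop :=
  P i = (e, j) ∨ P i = (j, e)

def Consec {k n : ℕ} (P : Fin k → ZMod n × ZMod n) (e j1 j2 : ZMod n) : Prop :=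
  Nbr P e j1 ∧ Nbr P e j2 ∧ keyW (e + 1) j2 < keyW (e + 1) j1 ∧
    ∀ j, Nbr P e j → keyW (e + 1) j ≤ keyW (e + 1) j2 ∨ keyW (e + 1) j1 ≤ keyW (e + 1) j

/-- factors of `R_e` and the gaps they belong to -/
inductive Fac {k n : ℕ} (P : Fin k → ZMod n × ZMod n) (e : ZMod n) :
    ZMod n → ZMod n → WR k n → Prop
  | first (i : Fin k) (j1 j : ZMod n) : e = j1 + 1 → Joins P i e j → Fac P e j1 j (X (i, e + 1))
  | last (i : Fin k) (j : ZMod n) : Joins P i e j → Fac P e j (e + 1) (X (i, e))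
  | mid (i i' : Fin k) (j j' : ZMod n) : i ≠ i' → Joins P i e j → Joins P i' e j' →
      Fac P e j j' (X (i, e) * X (i', e + 1) - X (i, e + 1) * X (i', e))

section
variable {k n : ℕ} [NeZero n] {P : Fin k → ZMod n × ZMod n}

theorem Joins.symm {i : Fin k} {e j : ZMod n} (h : Joins P i e j) : Joins P i j e := Or.symm h

theorem Joins.nbr {i : Fin k} {e j : ZMod n} (h : Joins P i e j) : Nbr P e j :=
  Or.inr (Or.inr ⟨i, h⟩)

theorem Joins.ne (G : Good P) {i : Fin k} {e j : ZMod n} (h : Joins P i e j) :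
    e ≠ j ∧ e ≠ j + 1 ∧ j ≠ e + 1 := by
  have h1 := G.h12 i; have h2 := G.h121 i; have h3 := G.h211 i
  rcases h with h | h <;> rw [h] at h1 h2 h3
  · exact ⟨h1, h2, h3⟩
  · exact ⟨h1.symm, h3, h2⟩

theorem Joins.inj (G : Good P) {i i' : Fin k} {e j : ZMod n} (h : Joins P i e j)
    (h' : Joins P i' e j) : i = i' := by
  rcases h with h | h <;> rcases h' with h' | h'
  · exact G.inj _ _ (h.trans h'.symm)
  · exact G.injs _ _ (by rw [h, h']; rfl)
  · exact G.injs _ _ (by rw [h, h']; rfl)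
  · exact G.inj _ _ (h.trans h'.symm)

theorem Joins.inj2 (G : Good P) {i : Fin k} {e j j' : ZMod n} (h : Joins P i e j)
    (h' : Joins P i e j') : j = j' := by
  have := (h.ne G).1
  have := (h'.ne G).1
  rcases h with h | h <;> rcases h' with h' | h' <;> rw [h] at h' <;> simp at h' <;> tauto

theorem IncidentE_iff {i : Fin k} {e : ZMod n} : IncidentE (P i) e ↔ ∃ j, Joins P i e j := by
  unfold IncidentE Joins
  constructor
  · rintro (h | h)
    · exact ⟨(P i).2, Or.inl (Prod.ext h rfl)⟩
    · exact ⟨(P i).1, Or.inr (Prod.ext rfl h)⟩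
  · rintro ⟨j, h | h⟩ <;> rw [h] <;> simp

theorem joins_otherEnd {i : Fin k} {e : ZMod n} (h : IncidentE (P i) e) :
    Joins P i e (otherEnd (P i) e) := by
  unfold otherEnd
  split_ifs with h'
  · left; exact Prod.ext h' rfl
  · right; exact Prod.ext rfl (h.resolve_left h')

theorem joins_otherEnd_eq (G : Good P) {i : Fin k} {e j : ZMod n} (h : Joins P i e j) :
    otherEnd (P i) e = j :=
  (joins_otherEnd (IncidentE_iff.2 ⟨j, h⟩)).inj2 G h

theorem keyW_inj {a x y : ZMod n} (h : keyW a x = keyW a y) : x = y := by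
  have := ZMod.val_injective n h
  exact sub_left_injective this

theorem keyW_lt (a x : ZMod n) : keyW a x < n := ZMod.val_lt _

theorem key_self (e : ZMod n) : keyW e e = 0 := by simp [keyW]

theorem key_pred (hn : 2 ≤ n) (j : ZMod n) : keyW (j + 1 + 1) j = n - 2 := by
  unfold keyW
  have : j - (j + 1 + 1) = ((n - 2 : ℕ) : ZMod n) := by
    rw [Nat.cast_sub hn]; simp; ring
  rw [this, ZMod.val_cast_of_lt (by omega)]

theorem key_e (e : ZMod n) : keyW (e + 1) e = n - 1 := by
  unfold keyW
  have hn := NeZero.ne n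
  have : e - (e + 1) = ((n - 1 : ℕ) : ZMod n) := by
    rw [Nat.cast_sub (by omega)]; simp
  rw [this, ZMod.val_cast_of_lt (by omega)]

theorem Joins.key (G : Good P) {i : Fin k} {e j : ZMod n} (h : Joins P i e j) :
    1 ≤ keyW (e + 1) j ∧ keyW (e + 1) j + 3 ≤ n := by
  have hn := G.n4
  obtain ⟨h1, h2, h3⟩ := h.ne G
  have l := keyW_lt (e + 1) j
  have a1 : keyW (e + 1) j ≠ 0 := by
    rw [← key_self (e + 1)]; exact fun h => h3 (keyW_inj h)
  have a2 : keyW (e + 1) j ≠ n - 1 := by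
    rw [← key_e e]; exact fun h => h1 (keyW_inj h).symm
  have a3 : keyW (e + 1) j ≠ n - 2 := by
    have := key_pred (by omega : 2 ≤ n) (e - 1)
    rw [sub_add_cancel] at this
    rw [← this]; exact fun h => h2 (by rw [keyW_inj h]; ring)
  omega

theorem Consec.fac (G : Good P) {e j1 j2 : ZMod n} (h : Consec P e j1 j2) :
    (e = j1 + 1 ∧ j2 = e + 1) ∨ ∃ f, Fac P e j1 j2 f := by
  obtain ⟨h1, h2, h3, h4⟩ := h
  have hn := G.n4
  rcases h1 with rfl | h1 | ⟨i, h1⟩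
  · rw [key_self] at h3; omega
  · rcases h2 with h2 | rfl | ⟨i, h2⟩
    · exact Or.inl ⟨h1, h2⟩
    · have : j1 = j2 := by simpa using h1.symm
      subst this; omega
    · exact Or.inr ⟨_, .first i _ _ h1 h2⟩
  · have k1 := Joins.key G h1
    rcases h2 with rfl | rfl | ⟨i', h2⟩
    · exact Or.inr ⟨_, .last i _ h1⟩
    · rw [key_pred (by omega)] at h3; omega
    · refine Or.inr ⟨_, .mid i i' _ _ ?_ h1 h2⟩
      rintro rfl
      have := Joins.inj2 G h1 h2
      subst this; omega

theorem fac_dvd (G : Good P) {e j1 j2 : ZMod n} {s : ℕ} {q : Fin s → Fin k}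
    (hq : EnumIncident P e s q) (h : Consec P e j1 j2) {f : WR k n} (hf : Fac P e j1 j2 f) :
    f ∣ Redge k n e s q := by
  obtain ⟨q1, q2, q3, q4⟩ := hq
  obtain ⟨h1, h2, h3, h4⟩ := h
  have hn := G.n4
  have hnb : ∀ r, Nbr P e (otherEnd (P (q r)) e) := fun r => (joins_otherEnd (q2 r)).nbr
  have hkey : ∀ r, 1 ≤ keyW (e + 1) (otherEnd (P (q r)) e) ∧
    keyW (e + 1) (otherEnd (P (q r)) e) + 3 ≤ n := fun r => (joins_otherEnd (q2 r)).key G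
  cases hf with
  | first i _ _ he hj =>
    obtain ⟨r, rfl⟩ := q3 i (IncidentE_iff.2 ⟨_, hj⟩)
    have hs : s ≠ 0 := by have := r.2; omega
    have : r = ⟨0, by omega⟩ := by
      by_contra hr
      have l := q4 ⟨0, by omega⟩ r (by
        rw [Fin.lt_def]; have : r.1 ≠ 0 := fun h => hr (Fin.ext h)
        simp; omega)
      rw [joins_otherEnd_eq G hj] at l
      have := h4 _ (hnb ⟨0, by omega⟩)
      have := hkey ⟨0, by omega⟩
      subst he
      rw [key_pred (by omega)] at *
      omega
    subst this
    unfold Redge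
    rw [dif_neg hs, mul_assoc]
    exact dvd_mul_right _ _
  | last i _ hj =>
    obtain ⟨r, rfl⟩ := q3 i (IncidentE_iff.2 ⟨_, hj⟩)
    have hs : s ≠ 0 := by have := r.2; omega
    have : r = ⟨s - 1, by omega⟩ := by
      by_contra hr
      have l := q4 r ⟨s - 1, by omega⟩ (by
        rw [Fin.lt_def]; have : r.1 ≠ s - 1 := fun h => hr (Fin.ext h)
        simp; omega)
      rw [joins_otherEnd_eq G hj] at l
      have := h4 _ (hnb ⟨s - 1, by omega⟩)
      have := hkey ⟨s - 1, by omega⟩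
      rw [key_self] at *
      omega
    subst this
    unfold Redge
    rw [dif_neg hs]
    exact dvd_mul_left _ _
  | mid i i' _ _ hne hj hj' =>
    obtain ⟨r, rfl⟩ := q3 i (IncidentE_iff.2 ⟨_, hj⟩)
    obtain ⟨r', rfl⟩ := q3 i' (IncidentE_iff.2 ⟨_, hj'⟩)
    have hs : s ≠ 0 := by have := r.2; omega
    have hlt : r < r' := by
      rcases lt_trichotomy r r' with h | h | h
      · exact h
      · subst h; exact absurd rfl hne
      · have l := q4 _ _ h
        rw [joins_otherEnd_eq G hj, joins_otherEnd_eq G hj'] at l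
        omega
    have : r'.1 = r.1 + 1 := by
      by_contra hr
      rw [Fin.lt_def] at hlt
      have l := q4 r ⟨r.1 + 1, by have := r'.2; omega⟩ (by
        rw [Fin.lt_def]; simp)
      have l' := q4 ⟨r.1 + 1, by have := r'.2; omega⟩ r' (by
        rw [Fin.lt_def]; simp; omega)
      rw [joins_otherEnd_eq G hj] at l
      rw [joins_otherEnd_eq G hj'] at l'
      have := h4 _ (hnb ⟨r.1 + 1, by have := r'.2; omega⟩)
      omega
    have hr' : r' = ⟨r.1 + 1, by have := r'.2; omega⟩ := Fin.ext this
    unfold Redge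
    rw [dif_neg hs]
    apply Dvd.dvd.mul_right
    apply Dvd.dvd.mul_left
    have := Finset.dvd_prod_of_mem (fun r : Fin (s - 1) => 
        ((X (q ⟨r.1, by have := r.2; omega⟩, e) *
            X (q ⟨r.1 + 1, by have := r.2; omega⟩, e + 1) -
          X (q ⟨r.1, by have := r.2; omega⟩, e + 1) *
            X (q ⟨r.1 + 1, by have := r.2; omega⟩, e)) : WR k n)) 
        (Finset.mem_univ (⟨r.1, by have := r'.2; omega⟩ : Fin (s - 1)))
    rw [hr']
    exact this

theorem row_sum {F : Type*} [Field F] (G : Good P) (φ : WR k n →+* F) (z : ZMod n → F)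
    {i : Fin k} {e j : ZMod n} (h : Joins P i e j) :
    ∑ v, φ (MWpoly k n P i v) * z v = φ (X (i, e)) * z e + φ (X (i, e + 1)) * z (e + 1)
      + φ (X (i, j)) * z j + φ (X (i, j + 1)) * z (j + 1) := by
  have hs : propSupp (P i) = {e, e + 1, j, j + 1} := by
    rcases h with h | h <;> rw [h]
    · rfl
    · ext; simp [propSupp]; tauto
  obtain ⟨h1, h2, h3⟩ := h.ne G
  have hn := G.n4
  have : Fact (1 < n) := ⟨by omega⟩
  have h0 : ∀ x : ZMod n, x ≠ x + 1 := by intro x; simp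
  have : ∀ v, φ (MWpoly k n P i v) * z v = 
    if v ∈ propSupp (P i) then φ (X (i, v)) * z v else 0 := by
    intro v; unfold MWpoly; simp only [Matrix.of_apply]; split_ifs <;> simp
  simp_rw [this]
  rw [Finset.sum_ite_mem, Finset.univ_inter, hs]
  rw [Finset.sum_insert, Finset.sum_insert, Finset.sum_insert, Finset.sum_singleton]
  · ring
  · simp
  · simp only [Finset.mem_insert, Finset.mem_singleton, not_or]
    refine ⟨h3.symm, ?_⟩
    intro h; apply h1; simpa using h
  · simp only [Finset.mem_insert, Finset.mem_singleton, not_or]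
    exact ⟨h0 e, h1, h2⟩

theorem lin_rule {F : Type*} [Field F] (G : Good P) (φ : WR k n →+* F) (z : ZMod n → F)
    (hz : ∀ i, ∑ v, φ (MWpoly k n P i v) * z v = 0)
    {s : ZMod n → ℕ} {q : ∀ e : ZMod n, Fin (s e) → Fin k}
    (hq : ∀ e : ZMod n, EnumIncident P e (s e) (q e))
    (hR : ∀ e, φ (Redge k n e (s e) (q e)) ≠ 0) {e j1 j2 : ZMod n}
    (h : Consec P e j1 j2) (i1 : z j1 = 0 ∧ z (j1 + 1) = 0) (i2 : z j2 = 0 ∧ z (j2 + 1) = 0) :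
    z e = 0 ∧ z (e + 1) = 0 := by
  rcases h.fac G with ⟨rfl, rfl⟩ | ⟨f, hf⟩
  · exact ⟨i1.2, i2.1⟩
  have hf0 : φ f ≠ 0 := by
    intro h0
    obtain ⟨g, hg⟩ := fac_dvd G (hq e) h hf
    apply hR e
    rw [hg, map_mul, h0, zero_mul]
  cases hf with
  | first i _ _ he hj =>
    have hr := hz i
    rw [row_sum G φ z hj, i2.1, i2.2] at hr
    have : z e = 0 := by rw [he]; exact i1.2
    simp [this, hf0] at hr
    exact ⟨this, hr⟩
  | last i _ hj =>
    have hr := hz i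
    rw [row_sum G φ z hj, i1.1, i1.2] at hr
    have : z (e + 1) = 0 := i2.1
    simp [this, hf0] at hr
    exact ⟨hr, this⟩
  | mid i i' _ _ hne hj hj' =>
    have hr := hz i
    have hr' := hz i'
    rw [row_sum G φ z hj, i1.1, i1.2] at hr
    rw [row_sum G φ z hj', i2.1, i2.2] at hr'
    simp only [map_sub, map_mul] at hf0
    constructor
    · apply (mul_eq_zero.1 (_ : (_ : F) * _ = 0)).resolve_left hf0
      linear_combination φ (X (i', e + 1)) * hr - φ (X (i, e + 1)) * hr'
    · apply (mul_eq_zero.1 (_ : (_ : F) * _ = 0)).resolve_left hf0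
      linear_combination φ (X (i, e)) * hr' - φ (X (i', e)) * hr

end

set_option linter.unusedSectionVars false

section
variable {k n : ℕ} [NeZero n] {P : Fin k → ZMod n × ZMod n}

theorem Nbr.ne (G : Good P) {e j : ZMod n} (h : Nbr P e j) : j ≠ e := by
  have hn := G.n4
  have : Fact (1 < n) := ⟨by omega⟩
  rcases h with h | h | ⟨i, h⟩
  · rw [h]; simp
  · rw [h]; simp
  · exact (Joins.ne G h).1.symm

theorem InfC_bd {Dg : Finset (ℕ × ℕ)} {s c : ℕ} (hs : s ≤ n) (h : InfC n Dg s c) :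
    1 ≤ c ∧ c ≤ n := by
  cases h with
  | base _ h1 h2 => exact ⟨h1, by omega⟩
  | r1 o x _ h1 h2 h3 h4 => exact ⟨by omega, h4.2.2.1⟩
  | r2 x _ o h1 h2 h3 h4 => exact ⟨by omega, h3.2.2.1⟩

theorem sound {F : Type*} [Field F] (G : Good P) (φ : WR k n →+* F) (z : ZMod n → F)
    (hz : ∀ i, ∑ v, φ (MWpoly k n P i v) * z v = 0)
    {s : ZMod n → ℕ} {q : ∀ e : ZMod n, Fin (s e) → Fin k}
    (hq : ∀ e : ZMod n, EnumIncident P e (s e) (q e))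
    (hR : ∀ e, φ (Redge k n e (s e) (q e)) ≠ 0) (a : ZMod n) (t0 : ℕ) (_ht0 : t0 ≤ n)
    (h0 : ∀ t : ℕ, 1 ≤ t → t ≤ t0 + 1 → z (a - t) = 0) {c : ℕ}
    (hc : InfC n (DG P a) t0 c) : z (ed a c) = 0 ∧ z (ed a c + 1) = 0 := by
  have hn := G.n4
  induction hc with
  | base c h1 h2 =>
    constructor
    · have := h0 (c + 1) (by omega) (by omega)
      convert this using 2; unfold ed; push_cast; ring
    · have := h0 c (by omega) (by omega)
      convert this using 2; unfold ed; ring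
  | r1 o x c h1 h2 h3 h4 h5 h6 h7 i1 i2 =>
    have b3 := h3.1; have b4 := h4.2.2.1
    apply lin_rule G φ z hz hq hR _ i1 i2
    have co := cr_ed a b3 (by omega : o ≤ n)
    have cx := cr_ed a (by omega) (by omega : x ≤ n)
    have cc := cr_ed a (by omega) (by omega : c ≤ n)
    have n1 : Nbr P (ed a c) (ed a o) :=
      Nbr_symm.1 ((EE_iff (by omega) a o c b3 (by omega) (by omega)).1 h3)
    have n2 : Nbr P (ed a c) (ed a x) :=
      Nbr_symm.1 ((EE_iff (by omega) a x c (by omega) (by omega) (by omega)).1 h4)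
    refine ⟨n1, n2, ?_, ?_⟩
    · rw [key_succ a _ _ (n1.ne G), key_succ a _ _ (n2.ne G), co, cx, cc]
      split_ifs <;> omega
    · intro j hj
      rw [key_succ a _ _ (n1.ne G), key_succ a _ _ (n2.ne G), key_succ a _ _ (hj.ne G), co, cx, cc]
      have hne : cr a j ≠ c := fun h => hj.ne G (cr_inj (h.trans cc.symm))
      have y1 := cr_pos a j; have y2 := cr_le a j
      by_cases hlt : cr a j < c
      · have := h5 (cr a j)
        have hE : EE n (DG P a) (cr a j) c := by
          rw [EE_iff (by omega) a _ _ y1 hlt (by omega), ed_cr]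
          exact Nbr_symm.1 hj
        have : ¬ (o < cr a j ∧ cr a j < x) := fun h => this h.1 h.2 hE
        split_ifs <;> omega
      · split_ifs <;> omega
  | r2 x c o h1 h2 h3 h4 h5 h6 h7 h8 i1 i2 =>
    have b3 := h3.1; have b4 := h4.2.2.1
    apply lin_rule G φ z hz hq hR _ i1 i2
    have co := cr_ed a (by omega) (by omega : o ≤ n)
    have cx := cr_ed a (by omega) (by omega : x ≤ n)
    have cc := cr_ed a (by omega) (by omega : c ≤ n)
    have n1 : Nbr P (ed a c) (ed a o) :=
      ((EE_iff (by omega) a c o (by omega) (by omega) (by omega)).1 h4)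
    have n2 : Nbr P (ed a c) (ed a x) :=
      Nbr_symm.1 ((EE_iff (by omega) a x c (by omega) (by omega) (by omega)).1 h3)
    refine ⟨n1, n2, ?_, ?_⟩
    · rw [key_succ a _ _ (n1.ne G), key_succ a _ _ (n2.ne G), co, cx, cc]
      split_ifs <;> omega
    · intro j hj
      rw [key_succ a _ _ (n1.ne G), key_succ a _ _ (n2.ne G), key_succ a _ _ (hj.ne G), co, cx, cc]
      have hne : cr a j ≠ c := fun h => hj.ne G (cr_inj (h.trans cc.symm))
      have y1 := cr_pos a j; have y2 := cr_le a j
      by_cases hlt : cr a j < c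
      · have hE : EE n (DG P a) (cr a j) c := by
          rw [EE_iff (by omega) a _ _ y1 hlt (by omega), ed_cr]
          exact Nbr_symm.1 hj
        have : ¬ (cr a j < x) := fun h => h5 _ h hE
        split_ifs <;> omega
      · have hE : EE n (DG P a) c (cr a j) := by
          rw [EE_iff (by omega) a _ _ (by omega) (by omega) (by omega), ed_cr]
          exact hj
        have : ¬ (o < cr a j) := fun h => h6 _ h hE
        split_ifs <;> omega

open Classical in
noncomputable def DS (P : Fin k → ZMod n × ZMod n) (a : ZMod n) (y : ℕ) : Finset (ZMod n) :=
  Finset.univ.filter (fun v => y < cr a v ∧ cr a v < n ∧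
    InfC n (DG P a) (cr a v - 1) (cr a v))

theorem DS_card (a : ZMod n) (y : ℕ) : (DS P a y).card = dco n (DG P a) y n := by
  classical
  unfold DS dco
  apply Finset.card_bij (fun v _ => cr a v)
  · intro v hv
    simpa [and_assoc] using hv
  · intro v _ w _ h; exact cr_inj h
  · intro t ht
    simp only [Finset.mem_filter, Finset.mem_Ioo] at ht
    have := cr_ed a (by omega : 1 ≤ t) (by omega : t ≤ n)
    refine ⟨ed a t, ?_, this⟩
    simp only [Finset.mem_filter, Finset.mem_univ, true_and, this]
    tauto

theorem DS_mono (a : ZMod n) {y y' : ℕ} (h : y ≤ y') : DS P a y' ⊆ DS P a y := by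
  intro v
  simp only [DS, Finset.mem_filter, Finset.mem_univ, true_and]
  rintro ⟨h1, h2⟩
  exact ⟨by omega, h2⟩

theorem key_sub (a : ZMod n) {t : ℕ} (h1 : 1 ≤ t) (h2 : t ≤ n) : keyW a (a - t) = n - t := by
  unfold keyW
  have : a - t - a = ((n - t : ℕ) : ZMod n) := by
    rw [Nat.cast_sub h2]; simp
  rw [this, ZMod.val_cast_of_lt (by omega)]

theorem eq_sub_key (a v : ZMod n) : v = a - ((n - keyW a v : ℕ) : ZMod n) := by
  rw [Nat.cast_sub (keyW_lt a v).le]; simp [keyW]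

theorem lemL {F : Type*} [Field F] (G : Good P) (φ : WR k n →+* F) (z : ZMod n → F)
    (hz : ∀ i, ∑ v, φ (MWpoly k n P i v) * z v = 0)
    {s : ZMod n → ℕ} {q : ∀ e : ZMod n, Fin (s e) → Fin k}
    (hq : ∀ e : ZMod n, EnumIncident P e (s e) (q e))
    (hR : ∀ e, φ (Redge k n e (s e) (q e)) ≠ 0) (a : ZMod n) (m : ℕ)
    (h : ∀ v, m ≤ keyW a v → v ∉ DS P a 2 → z v = 0) (v : ZMod n) (hv : m ≤ keyW a v) :
    z v = 0 := by
  have main : ∀ t : ℕ, 1 ≤ t → t ≤ n → m ≤ n - t → z (a - t) = 0 := by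
    intro t
    induction t using Nat.strong_induction_on with
    | _ t ih =>
    intro h1 h2 h3
    by_cases hD : a - (t : ZMod n) ∈ DS P a 2
    · simp only [DS, Finset.mem_filter, Finset.mem_univ, true_and] at hD
      obtain ⟨d1, d2, d3⟩ := hD
      rcases Nat.lt_or_ge 1 t with ht | ht
      · have e1 : a - (t : ZMod n) = ed a (t - 1) := by
          unfold ed; rw [Nat.cast_sub h1]; push_cast; ring
        have e2 : cr a (a - (t : ZMod n)) = t - 1 := by
          rw [e1, cr_ed a (by omega) (by omega)]
        rw [e2] at d3
        have := sound G φ z hz hq hR a (t - 1 - 1) (by omega) (fun t' g1 g2 =>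
          ih t' (by omega) g1 (by omega) (by omega)) d3
        rw [e1]; exact this.1
      · obtain rfl : t = 1 := by omega
        have e1 : a - ((1 : ℕ) : ZMod n) = ed a n := by unfold ed; simp
        rw [e1, cr_ed a (by omega) (by omega)] at d2
        omega
    · exact h _ (by rw [key_sub a h1 h2]; exact h3) hD
  rw [eq_sub_key a v]
  have := keyW_lt a v
  exact main _ (by omega) (by omega) (by omega)

theorem minor_iff {F : Type*} [Field F] (φ : WR k n →+* F) {S : Finset (ZMod n)}
    (hS : S.card = k) : φ (minorW k n P S) ≠ 0 ↔
    ∀ z : ZMod n → F, (∀ v, v ∉ S → z v = 0) → (∀ i, ∑ v, φ (MWpoly k n P i v) * z v = 0) →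
      z = 0 := by
  unfold minorW
  rw [dif_pos hS, RingHom.map_det, Ne, ← Matrix.exists_mulVec_eq_zero_iff]
  let E : Fin k ≃ S := (finCongr hS.symm).trans S.equivFin.symm
  have hE : ∀ i, ((S.equivFin.symm (Fin.cast hS.symm i)) : ZMod n) = E i := fun i => rfl
  have hsum : ∀ (z : ZMod n → F), (∀ v, v ∉ S → z v = 0) → ∀ i,
      ∑ v, φ (MWpoly k n P i v) * z v = ∑ j, φ (MWpoly k n P i (E j)) * z (E j) := by
    intro z hz i
    rw [← Finset.sum_subset (Finset.subset_univ S) (fun v _ hv => by rw [hz v hv, mul_zero]),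
      ← Finset.sum_coe_sort S]
    exact (Equiv.sum_comp E (fun v : S => φ (MWpoly k n P i v) * z v)).symm
  constructor
  · intro h z hz hM
    by_contra hne
    apply h
    refine ⟨fun j => z (E j), ?_, ?_⟩
    · intro h0
      apply hne
      funext v
      by_cases hv : v ∈ S
      · have := congrFun h0 (E.symm ⟨v, hv⟩)
        simpa using this
      · exact hz v hv
    · funext i
      simp only [Matrix.mulVec, dotProduct, RingHom.mapMatrix_apply, Matrix.map_apply,
        Matrix.submatrix_apply, id, hE, Pi.zero_apply]
      rw [← hsum z hz i]; exact hM i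
  · rintro h ⟨w, hw, hM⟩
    classical
    apply hw
    let z : ZMod n → F := fun v => if hv : v ∈ S then w (E.symm ⟨v, hv⟩) else 0
    have hz : ∀ v, v ∉ S → z v = 0 := fun v hv => dif_neg hv
    have hzE : ∀ j, z (E j) = w j := by
      intro j
      have : ((E j : S) : ZMod n) ∈ S := (E j).2
      simp [z]
    have := h z hz (by
      intro i
      rw [hsum z hz i]
      simp_rw [hzE]
      have := congrFun hM i
      simpa only [Matrix.mulVec, dotProduct, RingHom.mapMatrix_apply, Matrix.map_apply,
        Matrix.submatrix_apply, id, hE, Pi.zero_apply] using this)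
    funext j
    rw [← hzE, this]; rfl

theorem exists_ker {F : Type*} [Field F] {V : Type*} [Fintype V] [DecidableEq V]
    (S : Finset V) (T : Finset (Fin k)) (h : T.card < S.card) (M : Fin k → V → F) :
    ∃ z : V → F, z ≠ 0 ∧ (∀ v, v ∉ S → z v = 0) ∧ ∀ i ∈ T, ∑ v, M i v * z v = 0 := by
  let f : (S → F) →ₗ[F] (T → F) :=
    Matrix.mulVecLin (Matrix.of fun (i : T) (v : S) => M i v)
  have hk : LinearMap.ker f ≠ ⊥ := LinearMap.ker_ne_bot_of_finrank_lt (by simpa using h)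
  obtain ⟨w, hw, hw0⟩ := Submodule.exists_mem_ne_zero_of_ne_bot hk
  refine ⟨fun v => if hv : v ∈ S then w ⟨v, hv⟩ else 0, ?_, fun v hv => dif_neg hv, ?_⟩
  · intro h0
    apply hw0
    funext v
    have := congrFun h0 v.1
    simpa using this
  · intro i hi
    rw [← Finset.sum_subset (Finset.subset_univ S)
      (fun v _ hv => by simp [hv]), ← Finset.sum_coe_sort S]
    have := congrFun (LinearMap.mem_ker.1 hw) ⟨i, hi⟩
    simpa [f, Matrix.mulVec, dotProduct] using this

theorem D_basis {F : Type*} [Field F] (G : Good P) (φ : WR k n →+* F)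
    {s : ZMod n → ℕ} {q : ∀ e : ZMod n, Fin (s e) → Fin k}
    (hq : ∀ e : ZMod n, EnumIncident P e (s e) (q e))
    (hR : ∀ e, φ (Redge k n e (s e) (q e)) ≠ 0) (a : ZMod n) :
    (DS P a 2).card = k ∧ φ (minorW k n P (DS P a 2)) ≠ 0 := by
  have hn := G.n4
  have hL : ∀ z : ZMod n → F, (∀ v, v ∉ DS P a 2 → z v = 0) →
      (∀ i, ∑ v, φ (MWpoly k n P i v) * z v = 0) → z = 0 := by
    intro z hz hM
    funext v
    exact lemL G φ z hM hq hR a 0 (fun v _ hv => hz v hv) v (Nat.zero_le _)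
  have h1 : k ≤ (DS P a 2).card := by
    have := count_total (DG_diss G a) (by omega)
    rwa [DG_card G, ← DS_card] at this
  have h2 : (DS P a 2).card = k := by
    by_contra hne
    obtain ⟨z, z0, z1, z2⟩ := exists_ker (DS P a 2) (Finset.univ : Finset (Fin k))
      (by rw [Finset.card_univ, Fintype.card_fin]; omega) (fun i v => φ (MWpoly k n P i v))
    exact z0 (hL z z1 fun i => z2 i (Finset.mem_univ _))
  exact ⟨h2, (minor_iff φ h2).2 hL⟩

theorem forall2_count {l l' : List ℕ} (h : List.Forall₂ (· ≤ ·) l l') (m : ℕ) :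
    l'.countP (fun x => decide (x ≤ m)) ≤ l.countP (fun x => decide (x ≤ m)) := by
  induction h with
  | nil => simp
  | cons h _ ih =>
    rw [List.countP_cons, List.countP_cons]
    simp only [decide_eq_true_eq]
    split_ifs <;> omega

theorem sort_count (S : Finset ℕ) (m : ℕ) :
    (S.sort (· ≤ ·)).countP (fun x => decide (x ≤ m)) = (S.filter (· ≤ m)).card := by
  rw [Finset.card_def, Finset.filter_val, ← Multiset.countP_eq_card_filter]
  conv_rhs => rw [← Finset.sort_eq S (· ≤ ·)]
  rw [Multiset.coe_countP]

theorem gale_count {a : ZMod n} {S T : Finset (ZMod n)} (h : GaleLEat a S T) (m : ℕ) :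
    (T.filter (fun v => keyW a v ≤ m)).card ≤ (S.filter (fun v => keyW a v ≤ m)).card := by
  have := forall2_count h m
  rw [sort_count, sort_count, Finset.filter_image, Finset.filter_image,
    Finset.card_image_of_injective _ (fun _ _ => keyW_inj),
    Finset.card_image_of_injective _ (fun _ _ => keyW_inj)] at this
  exact this

theorem necklace_eq {F : Type*} [Field F] (G : Good P) (φ : WR k n →+* F)
    (hφ : Function.Injective φ)
    {s : ZMod n → ℕ} {q : ∀ e : ZMod n, Fin (s e) → Fin k}
    (hq : ∀ e : ZMod n, EnumIncident P e (s e) (q e))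
    (hR : ∀ e, φ (Redge k n e (s e) (q e)) ≠ 0) {a : ZMod n} {I : Finset (ZMod n)}
    (hI : NecklaceAt k n P a I) : I = DS P a 2 := by
  classical
  obtain ⟨d1, d2⟩ := D_basis G φ hq hR a
  obtain ⟨⟨i1, i2⟩, i3⟩ := hI
  have hg := gale_count (i3 _ ⟨d1, fun h => d2 (by rw [h, map_zero])⟩)
  set D := DS P a 2 with hD
  by_contra hne
  have hex : (symmDiff I D).Nonempty := by
    rw [Finset.nonempty_iff_ne_empty]; intro h; exact hne (symmDiff_eq_bot.1 h)
  obtain ⟨b, hb, hmin⟩ := Finset.exists_min_image (symmDiff I D) (keyW a) hex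
  have agree : ∀ v, keyW a v < keyW a b → (v ∈ I ↔ v ∈ D) := by
    intro v hv
    by_contra h
    have : v ∈ symmDiff I D := by rw [Finset.mem_symmDiff]; tauto
    have := hmin v this
    omega
  rw [Finset.mem_symmDiff] at hb
  rcases hb with ⟨b1, b2⟩ | ⟨b1, b2⟩
  · obtain ⟨z, z0, z1, z2⟩ := exists_ker (insert b D) (Finset.univ : Finset (Fin k))
      (by rw [Finset.card_univ, Fintype.card_fin, Finset.card_insert_of_notMem b2]; omega)
      (fun i v => φ (MWpoly k n P i v))
    have hM : ∀ i, ∑ v, φ (MWpoly k n P i v) * z v = 0 := fun i => z2 i (Finset.mem_univ _)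
    have hl := lemL G φ z hM hq hR a (keyW a b + 1) (fun v hv hvD => z1 v (by
      rw [Finset.mem_insert, not_or]
      refine ⟨?_, hvD⟩
      rintro rfl; omega))
    have hmi : φ (minorW k n P I) ≠ 0 := by
      intro h; exact i2 (hφ (by rw [h, map_zero]))
    apply z0
    refine (minor_iff φ i1).1 hmi z ?_ hM
    intro v hv
    by_cases hk : keyW a b + 1 ≤ keyW a v
    · exact hl v hk
    · apply z1
      rw [Finset.mem_insert, not_or]
      have hvb : v ≠ b := by rintro rfl; exact hv b1
      refine ⟨hvb, ?_⟩
      have : keyW a v ≠ keyW a b := fun h => hvb (keyW_inj h)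
      rw [← agree v (by omega)]; exact hv
  · have := hg (keyW a b)
    have hss : I.filter (fun v => keyW a v ≤ keyW a b) ⊂ D.filter (fun v => keyW a v ≤ keyW a b) := by
      rw [Finset.ssubset_iff_of_subset]
      · exact ⟨b, by simp [b1], by simp [b2]⟩
      · intro v hv
        rw [Finset.mem_filter] at hv ⊢
        refine ⟨?_, hv.2⟩
        have hvb : v ≠ b := by rintro rfl; exact b2 hv.1
        have : keyW a v ≠ keyW a b := fun h => hvb (keyW_inj h)
        rw [← agree v (by omega)]; exact hv.1
    have := Finset.card_lt_card hss
    omega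
end

set_option linter.unusedSectionVars false

section
variable {σ : Type*} [DecidableEq σ]

theorem X_irr (u : σ) : Irreducible (X u : MvPolynomial σ ℝ) := by
  have := irreducible_mul_X_add (1 : MvPolynomial σ ℝ) 0 u one_ne_zero (by simp) (by simp)
    isRelPrime_one_left
  simpa using this

noncomputable def ind (a b : σ) : MvPolynomial σ ℝ →+* ℝ :=
  (MvPolynomial.eval (fun u => if u = a ∨ u = b then (1 : ℝ) else 0))

theorem ind_X (a b u : σ) : ind a b (X u) = if u = a ∨ u = b then 1 else 0 := by simp [ind]

theorem quad_irr {a b c d : σ} (hab : a ≠ b) (hac : a ≠ c) (had : a ≠ d) (hbc : b ≠ c)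
    (hbd : b ≠ d) : Irreducible (X a * X b - X c * X d : MvPolynomial σ ℝ) := by
  have := irreducible_mul_X_add (X a : MvPolynomial σ ℝ) (- (X c * X d)) b (X_ne_zero a)
    (by simp [hab.symm]) (by
      rw [vars_neg]
      intro h
      have := vars_mul _ _ h
      simp [hbc, hbd] at this) (by
      rw [(X_irr a).isRelPrime_iff_not_dvd]
      rintro ⟨g, hg⟩
      have := congrArg (ind c d) hg
      simp [ind_X, hac, had] at this)
  simpa [sub_eq_add_neg] using this

theorem X_not_dvd_quad {a b c d u : σ} (hac : a ≠ c) (had : a ≠ d) (hbc : b ≠ c)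
    (hbd : b ≠ d) : ¬ (X u : MvPolynomial σ ℝ) ∣ X a * X b - X c * X d := by
  rintro ⟨g, hg⟩
  by_cases h : u = a ∨ u = b
  · have := congrArg (ind c d) hg
    have h' : ¬ (u = c ∨ u = d) := by
      rintro (rfl | rfl) <;> rcases h with h | h <;> simp_all
    simp [ind_X, hac, had, h'] at this
  · have := congrArg (ind a b) hg
    simp [ind_X, hac.symm, had.symm, hbc.symm, hbd.symm, h] at this

theorem quad_dvd_quad {a b c d a' b' c' d' : σ} (hac : a' ≠ c') (hbc : b' ≠ c')
    (h : (X a * X b - X c * X d : MvPolynomial σ ℝ) ∣ X a' * X b' - X c' * X d') :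
    ((a = a' ∨ a = b') ∧ (b = a' ∨ b = b')) ∨ ((c = a' ∨ c = b') ∧ (d = a' ∨ d = b')) := by
  obtain ⟨g, hg⟩ := h
  have := congrArg (ind a' b') hg
  simp only [map_sub, map_mul, ind_X] at this
  by_contra hcon
  rw [not_or, not_and_or, not_and_or] at hcon
  obtain ⟨h1, h2⟩ := hcon
  have e1 : ((if a = a' ∨ a = b' then (1:ℝ) else 0) * if b = a' ∨ b = b' then 1 else 0) = 0 := by
    rcases h1 with h1 | h1 <;> simp [h1]
  have e2 : ((if c = a' ∨ c = b' then (1:ℝ) else 0) * if d = a' ∨ d = b' then 1 else 0) = 0 := by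
    rcases h2 with h1 | h1 <;> simp [h1]
  rw [e1, e2] at this
  simp [hac.symm, hbc.symm] at this

theorem quad_not_dvd_X {a b c d u : σ} (hab : a ≠ b) (hcd : c ≠ d) :
    ¬ (X a * X b - X c * X d : MvPolynomial σ ℝ) ∣ X u := by
  rintro ⟨g, hg⟩
  have := congrArg (ind u u) hg
  simp only [map_sub, map_mul, ind_X, or_self] at this
  have e1 : ((if a = u then (1:ℝ) else 0) * if b = u then 1 else 0) = 0 := by
    by_cases h : a = u
    · subst h; simp [hab.symm]
    · simp [h]
  have e2 : ((if c = u then (1:ℝ) else 0) * if d = u then 1 else 0) = 0 := by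
    by_cases h : c = u
    · subst h; simp [hcd.symm]
    · simp [h]
  rw [e1, e2] at this
  simp at this

end

section
variable {k n : ℕ} [NeZero n] {P : Fin k → ZMod n × ZMod n}

noncomputable def quadW {k n : ℕ} (e : ZMod n) (i i' : Fin k) : WR k n :=
  X (i, e) * X (i', e + 1) - X (i, e + 1) * X (i', e)

theorem e_ne (G : Good P) (e : ZMod n) : e ≠ e + 1 := by
  have hn := G.n4
  have : Fact (1 < n) := ⟨by omega⟩
  simp

theorem e_ne2 (G : Good P) (e : ZMod n) : e ≠ e + 1 + 1 := by
  have hn := G.n4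
  intro h
  have h2 : ((2 : ℕ) : ZMod n) = 0 := by
    rw [add_assoc] at h
    have : (1 + 1 : ZMod n) = 0 := by simpa using h
    push_cast; rw [← this]; ring
  rw [ZMod.natCast_eq_zero_iff] at h2
  have := Nat.le_of_dvd (by omega) h2
  omega

theorem quadW_irr (G : Good P) (e : ZMod n) {i i' : Fin k} (h : i ≠ i') :
    Irreducible (quadW e i i') := by
  have := e_ne G e
  apply quad_irr <;> first | (simp [h, h.symm, this]; done) | exact fun h => this (congrArg Prod.snd h).symm

theorem X_not_dvd_quadW (G : Good P) (e : ZMod n) {i i' : Fin k} (h : i ≠ i') (u) :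
    ¬ X u ∣ quadW e i i' := by
  have := e_ne G e
  apply X_not_dvd_quad <;> first | (simp [h, h.symm, this]; done) | exact fun h => this (congrArg Prod.snd h).symm

theorem quadW_not_dvd_X (G : Good P) (e : ZMod n) {i i' : Fin k} (h : i ≠ i') (u) :
    ¬ quadW e i i' ∣ X u := by
  have := e_ne G e
  apply quad_not_dvd_X <;> simp [h]

theorem quadW_dvd_quadW (G : Good P) (e e' : ZMod n) {i i' j j' : Fin k} (h : i ≠ i') (h' : j ≠ j')
    (hd : quadW e i i' ∣ quadW e' j j') : e = e' ∧ ((i = j ∧ i' = j') ∨ (i = j' ∧ i' = j)) := by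
  have g1 := e_ne G e'
  have g2 := e_ne2 G e
  have := quad_dvd_quad (by simp [g1]) (by simp [h'.symm]) hd
  simp only [Prod.mk.injEq] at this
  rcases this with ⟨h1 | h1, h2 | h2⟩ | ⟨h1 | h1, h2 | h2⟩
  · exact absurd (h1.1.trans h2.1.symm) h
  · exact ⟨h1.2, Or.inl ⟨h1.1, h2.1⟩⟩
  · exfalso; apply g2; rw [h2.2]; exact h1.2
  · exact absurd (h1.1.trans h2.1.symm) h
  · exact absurd (h1.1.trans h2.1.symm) h
  · exfalso; apply g2; rw [h1.2]; exact h2.2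
  · exact ⟨h2.2, Or.inr ⟨h1.1, h2.1⟩⟩
  · exact absurd (h1.1.trans h2.1.symm) h

theorem Fac.irr (G : Good P) {e j1 j2 : ZMod n} {f : WR k n} (h : Fac P e j1 j2 f) :
    Irreducible f := by
  cases h with
  | first i => exact X_irr _
  | last i => exact X_irr _
  | mid i i' _ _ hne => exact quadW_irr G e hne

/-- index with clipping -/
def qc {k s : ℕ} (hs : 0 < s) (q : Fin s → Fin k) (t : ℕ) : Fin k :=
  q ⟨min t (s - 1), by omega⟩

noncomputable def fac {k n : ℕ} (e : ZMod n) {s : ℕ} (hs : 0 < s) (q : Fin s → Fin k) (t : ℕ) :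
    WR k n :=
  if t = 0 then X (qc hs q 0, e + 1) else if t = s then X (qc hs q (s - 1), e) else
    quadW e (qc hs q (t - 1)) (qc hs q t)

theorem Redge_eq (e : ZMod n) {s : ℕ} (hs : 0 < s) (q : Fin s → Fin k) :
    Redge k n e s q = ∏ t ∈ Finset.range (s + 1), fac e hs q t := by
  obtain ⟨m, rfl⟩ : ∃ m, s = m + 1 := ⟨s - 1, by omega⟩
  unfold Redge
  rw [dif_neg (by omega), Finset.prod_range_succ, Finset.prod_range_succ']
  have e0 : fac e hs q 0 = X (q ⟨0, hs⟩, e + 1) := by simp [fac, qc]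
  have e1 : fac e hs q (m + 1) = X (q ⟨m, by omega⟩, e) := by simp [fac, qc]
  have e2 : ∏ t ∈ Finset.range m, fac e hs q (t + 1) = 
    ∏ r : Fin m, quadW e (q ⟨r.1, by omega⟩) (q ⟨r.1 + 1, by omega⟩) := by
    rw [Finset.prod_range]
    apply Finset.prod_congr rfl
    rintro ⟨r, hr⟩ -
    have h1 : min r m = r := by omega
    have h2 : min (r + 1) m = r + 1 := by omega
    simp [fac, qc, h1, h2, hr.ne]
  rw [e0, e1, e2]
  simp only [quadW, Nat.add_sub_cancel]
  congr 1
  exact mul_comm _ _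

theorem qc_inj {s : ℕ} (hs : 0 < s) {q : Fin s → Fin k} (hq : Function.Injective q) {t t' : ℕ}
    (ht : t < s) (ht' : t' < s) (h : qc hs q t = qc hs q t') : t = t' := by
  have := Fin.mk.inj (hq h)
  omega

theorem fac_spec (G : Good P) (e : ZMod n) {s : ℕ} (hs : 0 < s) {q : Fin s → Fin k}
    (hq : EnumIncident P e s q) {t : ℕ} (ht : t ≤ s) :
    ∃ j1 j2, Consec P e j1 j2 ∧ Fac P e j1 j2 (fac e hs q t) := by
  obtain ⟨q1, q2, q3, q4⟩ := hq
  have hn := G.n4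
  have hj : ∀ t, Joins P (qc hs q t) e (otherEnd (P (qc hs q t)) e) := fun t =>
    joins_otherEnd (q2 _)
  have q4' : ∀ r r', r < r' → r' < s → keyW (e + 1) (otherEnd (P (qc hs q r')) e)
      < keyW (e + 1) (otherEnd (P (qc hs q r)) e) := by
    intro r r' h h'
    apply q4
    rw [Fin.lt_def]; simp; omega
  have q4'' : ∀ r r', r ≤ r' → r' < s → keyW (e + 1) (otherEnd (P (qc hs q r')) e)
      ≤ keyW (e + 1) (otherEnd (P (qc hs q r)) e) := by
    intro r r' h h'
    rcases h.eq_or_lt with rfl | h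
    · exact le_rfl
    · exact (q4' r r' h h').le
  have q3' : ∀ i j, Joins P i e j → ∃ r, r < s ∧ j = otherEnd (P (qc hs q r)) e := by
    intro i j h
    obtain ⟨r, rfl⟩ := q3 i (IncidentE_iff.2 ⟨_, h⟩)
    refine ⟨r.1, r.2, ?_⟩
    rw [← joins_otherEnd_eq G h]
    congr 3
    exact Fin.ext (by simp; omega)
  have hp : keyW (e + 1) (e - 1) = n - 2 := by
    have := key_pred (by omega : 2 ≤ n) (e - 1)
    rwa [sub_add_cancel] at this
  have hself := key_self (e + 1)
  unfold fac
  split_ifs with h0 h1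
  · refine ⟨e - 1, otherEnd (P (qc hs q 0)) e, ⟨Or.inr (Or.inl (by ring)), (hj 0).nbr, ?_, ?_⟩,
      .first _ _ _ (by ring) (hj 0)⟩
    · have := (hj 0).key G; omega
    · rintro j (rfl | h | ⟨i, h⟩)
      · left; omega
      · right; have : j = e - 1 := by rw [h]; ring
        rw [this]
      · left
        obtain ⟨r, hr, rfl⟩ := q3' i j h
        exact q4'' 0 r (by omega) hr
  · refine ⟨otherEnd (P (qc hs q (s - 1))) e, e + 1, ⟨(hj _).nbr, Or.inl rfl, ?_, ?_⟩,
      .last _ _ (hj _)⟩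
    · have := (hj (s - 1)).key G; omega
    · rintro j (rfl | h | ⟨i, h⟩)
      · left; omega
      · right; have : j = e - 1 := by rw [h]; ring
        rw [this]; have := (hj (s - 1)).key G; omega
      · right
        obtain ⟨r, hr, rfl⟩ := q3' i j h
        exact q4'' r (s - 1) (by omega) (by omega)
  · refine ⟨otherEnd (P (qc hs q (t - 1))) e, otherEnd (P (qc hs q t)) e,
      ⟨(hj _).nbr, (hj _).nbr, q4' _ _ (by omega) (by omega), ?_⟩,
      .mid _ _ _ _ ?_ (hj _) (hj _)⟩
    · rintro j (rfl | h | ⟨i, h⟩)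
      · left; omega
      · right; have : j = e - 1 := by rw [h]; ring
        rw [this]; have := (hj (t - 1)).key G; omega
      · obtain ⟨r, hr, rfl⟩ := q3' i j h
        rcases Nat.lt_or_ge r t with hlt | hlt
        · right; exact q4'' r (t - 1) (by omega) (by omega)
        · left; exact q4'' t r (by omega) (by omega)
    · intro h
      have := qc_inj hs q1 (by omega) (by omega) h
      omega

theorem fac_not_dvd (G : Good P) {e e' : ZMod n} {s s' : ℕ} (hs : 0 < s) (hs' : 0 < s')
    {q : Fin s → Fin k} {q' : Fin s' → Fin k}
    (hq : EnumIncident P e s q) (hq' : EnumIncident P e' s' q') 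
    (hee : e = e' → HEq q q' ∧ s = s') {t t' : ℕ}
    (ht : t ≤ s) (ht' : t' ≤ s') (h : fac e hs q t ∣ fac e' hs' q' t') : e = e' ∧ t = t' := by
  have ne1 : ∀ t, t ≠ 0 → t < s → qc hs q (t - 1) ≠ qc hs q t := by
    intro t h1 h2 h3
    have := qc_inj hs hq.1 (by omega) (by omega) h3; omega
  have ne2 : ∀ t, t ≠ 0 → t < s' → qc hs' q' (t - 1) ≠ qc hs' q' t := by
    intro t h1 h2 h3
    have := qc_inj hs' hq'.1 (by omega) (by omega) h3; omega
  have hX : ∀ i, IncidentE (P i) e → IncidentE (P i) e' → e ≠ e' + 1 ∧ e' ≠ e + 1 := by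
    intro i h1 h2
    have a1 := G.h12 i; have a2 := G.h121 i; have a3 := G.h211 i
    rcases h1 with rfl | rfl <;> rcases h2 with rfl | rfl
    · exact ⟨e_ne G _, e_ne G _⟩
    · exact ⟨a2, a3⟩
    · exact ⟨a3, a2⟩
    · exact ⟨e_ne G _, e_ne G _⟩
  have hi : ∀ t, IncidentE (P (qc hs q t)) e := fun t => hq.2.1 _
  have hi' : ∀ t, IncidentE (P (qc hs' q' t)) e' := fun t => hq'.2.1 _
  unfold fac at h
  split_ifs at h with h1 h2 h3 h4 h5 h6 h7 h8
  · simp [X_dvd_X] at h; exact ⟨h.2, by omega⟩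
  · rw [X_dvd_X] at h; simp at h
    exact absurd h.2.symm (hX _ (hi 0) (by rw [h.1]; exact hi' _)).2
  · exact absurd h (X_not_dvd_quadW G _ (ne2 _ h2 (by omega)) _)
  · rw [X_dvd_X] at h; simp at h
    exact absurd h.2 (hX _ (hi (s - 1)) (by rw [h.1]; exact hi' _)).1
  · simp [X_dvd_X] at h
    obtain ⟨-, hss⟩ := hee h.2
    exact ⟨h.2, by omega⟩
  · exact absurd h (X_not_dvd_quadW G _ (ne2 _ h5 (by omega)) _)
  · exact absurd h (quadW_not_dvd_X G _ (ne1 _ h1 (by omega)) _)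
  · exact absurd h (quadW_not_dvd_X G _ (ne1 _ h1 (by omega)) _)
  · obtain ⟨a1, a2⟩ := quadW_dvd_quadW G _ _ (ne1 _ h1 (by omega)) (ne2 _ h7 (by omega)) h
    obtain ⟨b1, b2⟩ := hee a1
    subst a1; subst b2
    rw [heq_iff_eq] at b1
    subst b1
    refine ⟨rfl, ?_⟩
    rcases a2 with ⟨c1, c2⟩ | ⟨c1, c2⟩
    · exact qc_inj hs hq.1 (by omega) (by omega) c2
    · have := qc_inj hs hq.1 (by omega) (by omega) c1
      have := qc_inj hs hq.1 (by omega) (by omega) c2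
      omega

theorem R_dvd (G : Good P) 
    {s : ZMod n → ℕ} {q : ∀ e : ZMod n, Fin (s e) → Fin k}
    (hq : ∀ e : ZMod n, EnumIncident P e (s e) (q e)) (g : WR k n)
    (hg : ∀ e j1 j2 f, Consec P e j1 j2 → Fac P e j1 j2 f → f ∣ g) :
    ∏ e, Redge k n e (s e) (q e) ∣ g := by
  apply Finset.prod_dvd_of_isRelPrime
  · intro e _ e' _ hne
    change IsRelPrime (Redge k n e (s e) (q e)) (Redge k n e' (s e') (q e'))
    rcases Nat.eq_zero_or_pos (s e) with h | h
    · have : Redge k n e (s e) (q e) = 1 := by unfold Redge; rw [dif_pos h]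
      rw [this]; exact isRelPrime_one_left
    rcases Nat.eq_zero_or_pos (s e') with h' | h'
    · have : Redge k n e' (s e') (q e') = 1 := by unfold Redge; rw [dif_pos h']
      rw [this]; exact isRelPrime_one_right
    rw [Redge_eq e h, Redge_eq e' h']
    apply IsRelPrime.prod_left
    intro t ht
    apply IsRelPrime.prod_right
    intro t' ht'
    rw [Finset.mem_range] at ht ht'
    obtain ⟨j1, j2, c, F⟩ := fac_spec G e h (hq e) (t := t) (by omega)
    rw [(F.irr G).isRelPrime_iff_not_dvd]
    intro hd
    exact hne (fac_not_dvd G h h' (hq e) (hq e') (fun h => absurd h hne)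
      (by omega) (by omega) hd).1
  · intro e _
    rcases Nat.eq_zero_or_pos (s e) with h | h
    · have : Redge k n e (s e) (q e) = 1 := by unfold Redge; rw [dif_pos h]
      rw [this]; exact one_dvd _
    rw [Redge_eq e h]
    apply Finset.prod_dvd_of_isRelPrime
    · intro t ht t' ht' hne
      change IsRelPrime _ _
      rw [Finset.mem_coe, Finset.mem_range] at ht ht'
      obtain ⟨j1, j2, c, F⟩ := fac_spec G e h (hq e) (t := t) (by omega)
      rw [(F.irr G).isRelPrime_iff_not_dvd]
      intro hd
      exact hne (fac_not_dvd G h h (hq e) (hq e) (fun _ => ⟨HEq.rfl, rfl⟩)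
        (by omega) (by omega) hd).2
    · intro t ht
      rw [Finset.mem_range] at ht
      obtain ⟨j1, j2, c, F⟩ := fac_spec G e h (hq e) (t := t) (by omega)
      exact hg _ _ _ _ c F

theorem Redge_ne (G : Good P) {e : ZMod n} {s : ℕ} {q : Fin s → Fin k}
    (hq : EnumIncident P e s q) : Redge k n e s q ≠ 0 := by
  rcases Nat.eq_zero_or_pos s with h | h
  · unfold Redge; rw [dif_pos h]; exact one_ne_zero
  · rw [Redge_eq e h, Finset.prod_ne_zero_iff]
    intro t ht
    rw [Finset.mem_range] at ht
    obtain ⟨j1, j2, c, F⟩ := fac_spec G e h hq (t := t) (by omega)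
    exact (F.irr G).ne_zero
end

set_option linter.unusedSectionVars false

theorem exists_field {R : Type} [CommRing R] (p : Ideal R) [p.IsPrime] :
    ∃ (F : Type) (_ : Field F) (φ : R →+* F), ∀ g, φ g = 0 ↔ g ∈ p := by
  refine ⟨FractionRing (R ⧸ p), inferInstance,
    (algebraMap (R ⧸ p) (FractionRing (R ⧸ p))).comp (Ideal.Quotient.mk p), ?_⟩
  intro g
  rw [RingHom.comp_apply, ← Ideal.Quotient.eq_zero_iff_mem]
  exact map_eq_zero_iff _ (IsFractionRing.injective _ _)

section
variable {k n : ℕ} [NeZero n] {P : Fin k → ZMod n × ZMod n}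

theorem cr_succ (a e : ZMod n) (hn : 2 ≤ n) : (cr a e = 1 ∧ cr a (e + 1) = n) ∨
    (2 ≤ cr a e ∧ cr a (e + 1) = cr a e - 1) := by
  have h1 := cr_pos a e; have h2 := cr_le a e
  have h3 := cr_pos a (e + 1); have h4 := cr_le a (e + 1)
  have hv := val_sub_cr a (e + 1) e
  have : Fact (1 < n) := ⟨by omega⟩
  rw [add_sub_cancel_left, ZMod.val_one] at hv
  split_ifs at hv <;> omega

theorem fac_dvd_minor (G : Good P) {e j1 j2 : ZMod n} {f : WR k n}
    (hc : Consec P e j1 j2) (hf : Fac P e j1 j2 f) (hk : (DS P (j1 + 2) 2).card = k) :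
    f ∣ minorW k n P (DS P (j1 + 2) 2) := by
  classical
  have hn := G.n4
  set a := j1 + 2 with ha
  have c1 : cr a j1 = 1 := by simp [cr, ha]
  set h := cr a e with hh
  set y := cr a j2 with hy
  obtain ⟨n1, n2, k1, k2⟩ := hc
  have he1 := n1.ne G
  have he2 := n2.ne G
  have hb1 := cr_pos a e; have hb2 := cr_le a e
  have yb1 := cr_pos a j2; have yb2 := cr_le a j2
  rw [← hh] at hb1 hb2
  rw [← hy] at yb1 yb2
  have h1 : 1 < h := by
    rcases Nat.lt_or_ge 1 h with h' | h'
    · exact h'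
    · exact absurd (cr_inj (by rw [c1, ← hh]; omega)) he1
  have key1 : keyW (e + 1) j1 = h - 2 := by
    rw [key_succ a e j1 he1, c1, if_pos h1]; omega
  have key2 := key_succ a e j2 he2
  rw [← hh, ← hy] at key2
  have hyh : y < h := by
    by_contra hcon
    rw [if_neg hcon] at key2
    omega
  rw [if_pos hyh] at key2
  have hy2 : 2 ≤ y := by omega
  have edh : ed a h = e := ed_cr a e
  have edy : ed a y = j2 := ed_cr a j2
  have ed1 : ed a 1 = j1 := by rw [← c1]; exact ed_cr a j1
  have E1 : EE n (DG P a) 1 h := by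
    rw [EE_iff (by omega) a 1 h le_rfl h1 hb2, edh, ed1]; exact Nbr_symm.1 n1
  have E2 : EE n (DG P a) y h := by
    rw [EE_iff (by omega) a y h yb1 hyh hb2, edh, edy]; exact Nbr_symm.1 n2
  have hcons : ∀ c, 1 < c → c < y → ¬ EE n (DG P a) c h := by
    intro c l1 l2 hE
    rw [EE_iff (by omega) a c h (by omega) (by omega) hb2, edh] at hE
    have hE' := Nbr_symm.1 hE
    have := k2 _ hE'
    rw [key1, key2, key_succ a e _ (hE'.ne G), cr_ed a (by omega) (by omega), ← hh,
      if_pos (by omega)] at this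
    omega
  have H := DG_diss G a
  have hcount := count_G H hy2 hyh E2 E1 hcons
  rw [← DS_card] at hcount
  -- rows
  set pr : Fin k → ℕ × ℕ := fun i => (min (cr a (P i).1) (cr a (P i).2),
      max (cr a (P i).1) (cr a (P i).2)) with hpr
  have hprm : ∀ i, pr i ∈ DG P a := fun i => Finset.mem_image_of_mem _ (Finset.mem_univ i)
  set T : Finset (Fin k) := Finset.univ.filter (fun i => pr i ∈ gset (DG P a) y) with hT
  have hTc : T.card ≤ (gset (DG P a) y).card := by
    apply Finset.card_le_card_of_injOn pr
    · intro i hi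
      simpa [hT] using hi
    · intro i _ i' _ hii; exact DG_inj G a hii
  have hjp : ∀ i e' j', Joins P i e' j' → cr a j' < cr a e' → pr i = (cr a j', cr a e') := by
    intro i e' j' hj hl
    rcases hj with hj | hj <;> simp [hpr, hj] <;> omega
  have mem1 : ∀ i, Joins P i e j1 → i ∈ T := by
    intro i hj
    have := hjp i e j1 hj (by omega)
    rw [hT, Finset.mem_filter, gset, Finset.mem_filter]
    refine ⟨Finset.mem_univ _, hprm i, ?_⟩
    rw [this]; left; simp only; omega
  have mem2 : ∀ i, Joins P i e j2 → i ∈ T := by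
    intro i hj
    have := hjp i e j2 hj (by omega)
    rw [hT, Finset.mem_filter, gset, Finset.mem_filter]
    refine ⟨Finset.mem_univ _, hprm i, ?_⟩
    rw [this]; right; simp only; omega
  have hprime : Prime f := (hf.irr G).prime
  have : (Ideal.span {f}).IsPrime := (Ideal.span_singleton_prime hprime.ne_zero).2 hprime
  obtain ⟨F, _, φ, hφ⟩ := exists_field (Ideal.span {f})
  simp_rw [Ideal.mem_span_singleton] at hφ
  have hφf : φ f = 0 := (hφ f).2 dvd_rfl
  rw [← hφ]
  by_contra hcon
  rw [← Ne, minor_iff φ hk] at hcon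
  -- touching
  have sup0 : ∀ z : ZMod n → F, (∀ v, v ∉ DS P a y → z v = 0) → ∀ v,
      ¬ (y < cr a v ∧ cr a v < n) → z v = 0 := by
    intro z hz v hv
    apply hz
    simp only [DS, Finset.mem_filter, Finset.mem_univ, true_and]
    tauto
  have touch : ∀ z : ZMod n → F, (∀ v, v ∉ DS P a y → z v = 0) → ∀ v,
      cr a v ≤ y → z v = 0 ∧ z (v + 1) = 0 := by
    intro z hz v hv
    have := cr_succ a v (by omega)
    exact ⟨sup0 z hz v (by omega), sup0 z hz _ (by omega)⟩
  have notT : ∀ z : ZMod n → F, (∀ v, v ∉ DS P a y → z v = 0) → ∀ i, i ∉ T →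
      ∑ v, φ (MWpoly k n P i v) * z v = 0 := by
    intro z hz i hi
    have hj : Joins P i (P i).1 (P i).2 := Or.inl rfl
    have hm := hprm i
    have hE : EE n (DG P a) (pr i).1 (pr i).2 := Dg_EE H hm
    rw [hT, Finset.mem_filter, gset, Finset.mem_filter] at hi
    have hi' : ¬ (((pr i).1 = 1 ∧ y < (pr i).2) ∨ y ≤ (pr i).1) := fun h' =>
      hi ⟨Finset.mem_univ _, hm, h'⟩
    have hle : (pr i).2 ≤ y := by
      by_contra hlt
      have b1 : 1 ≤ (pr i).1 := hE.1
      rcases lt_trichotomy (pr i).2 h with g | g | g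
      · exact EE_nc H hE E2 (by omega) (by omega) g
      · rw [g] at hE
        exact hcons _ (by omega) (by omega) hE
      · exact EE_nc H E1 hE (by omega) (by omega) g
    have l1 : cr a (P i).1 ≤ y := le_trans (le_max_left _ _) hle
    have l2 : cr a (P i).2 ≤ y := le_trans (le_max_right _ _) hle
    obtain ⟨t1, t2⟩ := touch z hz _ l1
    obtain ⟨t3, t4⟩ := touch z hz _ l2
    rw [row_sum G φ z hj, t1, t2, t3, t4]
    simp
  have final : ∀ p0 ∈ T, (∀ z : ZMod n → F, (∀ v, v ∉ DS P a y → z v = 0) →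
      (∀ i ∈ T.erase p0, ∑ v, φ (MWpoly k n P i v) * z v = 0) →
      ∑ v, φ (MWpoly k n P p0 v) * z v = 0) → False := by
    intro p0 hp0 hrow
    obtain ⟨z, z0, z1, z2⟩ := exists_ker (DS P a y) (T.erase p0)
      (by have := Finset.card_erase_lt_of_mem hp0; omega) (fun i v => φ (MWpoly k n P i v))
    apply z0
    apply hcon z
    · intro v hv
      exact z1 v (fun h' => hv (DS_mono a hy2 h'))
    · intro i
      by_cases hi : i ∈ T
      · by_cases hip : i = p0
        · subst hip
          exact hrow z z1 z2
        · exact z2 i (Finset.mem_erase.2 ⟨hip, hi⟩)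
      · exact notT z z1 i hi
  cases hf with
  | first i _ _ he hj =>
    apply final i (mem2 i hj)
    intro z hz _
    have hhn : h = n := by
      subst he
      rw [key_pred (by omega)] at key1; omega
    obtain ⟨t1, t2⟩ := touch z hz j2 le_rfl
    rw [row_sum G φ z hj, hφf, t1, t2, sup0 z hz e (by omega)]
    simp
  | last i _ hj =>
    apply final i (mem1 i hj)
    intro z hz _
    rw [key_self] at key2
    obtain ⟨t1, t2⟩ := touch z hz j1 (by omega)
    have hs := cr_succ a e (by omega)
    rw [row_sum G φ z hj, hφf, t1, t2, sup0 z hz (e + 1) (by omega)]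
    simp
  | mid i i' _ _ hne hj hj' =>
    apply final i (mem1 i hj)
    intro z hz hrows
    have hr' := hrows i' (Finset.mem_erase.2 ⟨hne.symm, mem2 i' hj'⟩)
    obtain ⟨t1, t2⟩ := touch z hz j1 (by omega)
    obtain ⟨t3, t4⟩ := touch z hz j2 le_rfl
    rw [row_sum G φ z hj', t3, t4] at hr'
    rw [row_sum G φ z hj, t1, t2]
    have hx : φ (X (i', e)) ≠ 0 := fun h0 => quadW_not_dvd_X G e hne _ ((hφ _).1 h0)
    apply (mul_eq_zero.1 (_ : φ (X (i', e)) * _ = 0)).resolve_left hx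
    simp only [map_sub, map_mul] at hφf
    linear_combination φ (X (i, e)) * hr' - z (e + 1) * hφf

end

theorem statement8 (k n : ℕ) [NeZero n] (P : Fin k → ZMod n × ZMod n)
    (hW : Admissible n (Multiset.map P Finset.univ.val))
    (s : ZMod n → ℕ) (q : ∀ e : ZMod n, Fin (s e) → Fin k)
    (hq : ∀ e : ZMod n, EnumIncident P e (s e) (q e))
    (I : ZMod n → Finset (ZMod n)) (hI : ∀ a : ZMod n, NecklaceAt k n P a (I a)) :
    Ideal.span {∏ e : ZMod n, Redge k n e (s e) (q e)} =
      (Ideal.span {∏ a : ZMod n, minorW k n P (I a)}).radical := by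
  have G := Good.of_adm hW
  have hIeq : ∀ a, I a = DS P a 2 := by
    obtain ⟨F, _, φ, hφ⟩ := exists_field (⊥ : Ideal (WR k n))
    simp_rw [Ideal.mem_bot] at hφ
    intro a
    exact necklace_eq G φ ((injective_iff_map_eq_zero φ).2 fun g hg => (hφ g).1 hg) hq
      (fun e h0 => Redge_ne G (hq e) ((hφ _).1 h0)) (hI a)
  apply le_antisymm
  · rw [Ideal.span_singleton_le_iff_mem, Ideal.radical_eq_sInf, Ideal.mem_sInf]
    rintro p ⟨hp, hpr⟩
    by_contra hR
    rw [Ideal.span_singleton_le_iff_mem] at hp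
    obtain ⟨F, _, φ, hφ⟩ := exists_field p
    rw [← hφ, map_prod, Finset.prod_eq_zero_iff] at hR hp
    obtain ⟨a, -, ha⟩ := hp
    rw [hIeq a] at ha
    exact (D_basis G φ hq (fun e h0 => hR ⟨e, Finset.mem_univ _, h0⟩) a).2 ha
  · rintro g ⟨m, hg⟩
    rw [Ideal.mem_span_singleton] at hg ⊢
    apply R_dvd G hq
    intro e j1 j2 f hc hf
    have hk : (DS P (j1 + 2) 2).card = k := by rw [← hIeq]; exact (hI _).1.1
    have h1 := fac_dvd_minor G hc hf hk
    rw [← hIeq] at h1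
    exact (hf.irr G).prime.dvd_of_dvd_pow
      ((h1.trans (Finset.dvd_prod_of_mem (fun a => minorW k n P (I a)) (Finset.mem_univ (j1 + 2)))).trans hg)
end
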